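/- Let m and d be integers with 0 ≤ m ≤ d−1, let p be a prime, and for each 0 ≤ ℓ ≤ m let r_ℓ = p^{e_ℓ} be a power of p with integer e_ℓ ≥ 0. Set N_ℓ = (r_ℓ−1)(2d+2−m). For each 0 ≤ ℓ ≤ m let the vertex set of Δ_{N_ℓ} be partitioned into d+1 color classes, each of cardinality at most 2r_ℓ−1. Assume that p(d−m) is even, or m = 0. Then for every collection of continuous maps f_0: Δ_{N_0} → ℝ^d, …, f_m: Δ_{N_m} → ℝ^d there exist an m-dimensional affine subspace L of ℝ^d and, for each 0 ≤ ℓ ≤ m, r_ℓ pairwise disjoint rainbow faces σ_1^ℓ, …, σ_{r_ℓ}^ℓ of Δ_{N_ℓ} such that f_ℓ(σ_j^ℓ) ∩ L ≠ ∅ for all 1 ≤ j ≤ r_ℓ. (The topological transversal weak colored Tverberg theorem.) -/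

import Mathlib

/-! The proof is by the configuration space / test map scheme, with the required Borsuk–Ulam theorem
proved by hand on the chain level.

**Configuration space.** Put `r = p ^ e ℓ` and `A = (ℤ/p) ^ e ℓ`. A point of the join of `N ℓ + 1`
copies of `A` is a convex combination of vertices of the simplex `Δ_{N ℓ}`, each of them assigned
to one element of `A`; equivalently, it is a family of points `x_g` (`g ∈ A`) of the cone over the
simplex with pairwise disjoint supports and total weight `1`. The space `XX` is the product of these
joins over `ℓ`, times auxiliary joins of copies of `ℤ/p` from which nonzero vectors `z s` of `𝕂 ^ d`
are read off (`frm`, `frm_ne_zero`). Here `𝕂 = ℝ` for `p = 2` and `𝕂 = ℂ` for odd `p`. The vectors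
`z s` (and their conjugates) give `d - m` functionals `φ t`. If certain products of the `z s` vanish
(`Gadget.π`), the `φ t` are independent, so that their common kernel is an `m`-dimensional subspace
`D` (`gadTwo`, `gadOdd`). Pairing each vector with its conjugate is what needs `d - m` to be even
when `p` is odd. For `m = 0` the coordinate functionals suffice (`gadZero`).

**Test functions.** The nontrivial Fourier coefficients over `A` of the weights of `x_g`, of the
colour counts `colr`, and of `φ t` applied to the images `f ℓ (x_g)` are equivariant functions, and
so are the products `π` and the `z s` evaluated on differences of the barycentres of the images in
the different blocks. At a common zero all `x_g` have the same weight and the same colour counts.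
As a colour class has fewer than `2 r` vertices, some `x_g` uses at most one of them, so this colour
count is zero and hence all are (`colr_zero`): the supports are rainbow. Moreover, all images lie in
one translate of `D`, the required affine subspace (`transversal`). For odd `p` it is enough to use
one of each pair `χ`, `-χ` of characters, as complex conjugation yields the other (`exists_half`).
The number `(r - 1)(d + 2 + (d - m))` of real equations in block `ℓ` is exactly `N ℓ`.

**Existence of a common zero** (`BU`, `bu_two`, `bu_odd`). The weights of the test functions are
triangular: in a suitable order each has a leading index, and the leading indices in each block are
at most as many as its dimension allows. Hence the product of the Euler classes, a product of linear
forms over `ℤ/p`, has a monomial with nonzero coefficient (`W_eq_prod`) that can be evaluated on a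
chain `Y` of the configuration space. This chain is a product of initial pieces of the periodic
resolution of `ℤ/p`; its boundary is a combination of whole orbit sums, which are invisible modulo
`p`. The Euler classes are represented by explicit cocycles on labels: the difference of signs for
`p = 2`, and the carry in the addition of angles for odd `p`. If there were no common zero, labelling
each point by the signs or arguments of the test functions would give an equivariant labelling, for
which the product cocycle vanishes on all small simplices. But after iterated barycentric subdivision
the value on `Y` is the same for all equivariant labellings (`exists_small_simplex`), and it is
nonzero for the model labelling (`value1`, `value2`): a contradiction. -/

open scoped BigOperators

noncomputable section

/-- The standard `N`-dimensional simplex, realized in Euclidean space `ℝ^{N+1}`. -/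
def stdSimp (N : ℕ) : Set (EuclideanSpace ℝ (Fin (N + 1))) :=
  {x | (∀ i, 0 ≤ x i) ∧ ∑ i, x i = 1}

/-- The face of the standard simplex spanned by the vertex set `S`. -/
def simpFace (N : ℕ) (S : Finset (Fin (N + 1))) : Set (EuclideanSpace ℝ (Fin (N + 1))) :=
  {x ∈ stdSimp N | ∀ i, x i ≠ 0 → i ∈ S}

set_option linter.unusedSectionVars false

/-! ### Ordered chains as linear combinations of lists -/

namespace TTW

open Finsupp

/-- Ordered simplicial chains on a vertex set `V` in all dimensions at once, with the augmentation:
a list of length `n + 1` is an ordered `n`-simplex and the empty list spans degree `-1`. -/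
abbrev Ch (R V : Type*) [CommRing R] := List V →₀ R

section chains
variable {R : Type*} [CommRing R] {V W U : Type*}

/-- The cone operator: prepend the vertex `x`. -/
def con (x : V) : Ch R V →ₗ[R] Ch R V := Finsupp.lmapDomain R R (List.cons x)

/-- The boundary of a single ordered simplex. -/
def bdl (R : Type*) [CommRing R] : List V → Ch R V
  | [] => 0
  | x :: l => single l 1 - con x (bdl R l)

/-- The boundary operator of the augmented ordered chain complex. -/
def bd : Ch R V →ₗ[R] Ch R V := Finsupp.linearCombination R (bdl R)

/-- The chain map induced by a map of vertices. -/
def mp (f : V → W) : Ch R V →ₗ[R] Ch R W := Finsupp.lmapDomain R R (List.map f)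

@[simp] lemma con_single (x : V) (l : List V) (r : R) :
    con x (single l r) = single (x :: l) r := by
  simp [con]

@[simp] lemma mp_single (f : V → W) (l : List V) (r : R) :
    mp f (single l r) = single (l.map f) r := by
  simp [mp]

@[simp] lemma bd_single (l : List V) (r : R) : bd (single l r) = r • bdl R l := by
  simp [bd]

/-- Linear maps out of chains agree as soon as they agree on simplices. -/
lemma ch_ext {M : Type*} [AddCommGroup M] [Module R M] {f g : Ch R V →ₗ[R] M}
    (h : ∀ l, f (single l 1) = g (single l 1)) (c : Ch R V) : f c = g c := by
  have : f = g := by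
    apply Finsupp.lhom_ext'
    intro l
    ext
    simpa using h l
  rw [this]

lemma bd_con (x : V) (c : Ch R V) : bd (con x c) = c - con x (bd c) := by
  refine ch_ext (f := bd ∘ₗ con x) (g := LinearMap.id - con x ∘ₗ bd) ?_ c
  intro l
  simp [bdl]

lemma bd_bdl (l : List V) : bd (bdl R l) = 0 := by
  induction l with
  | nil => simp [bdl]
  | cons x l ih => simp [bdl, bd_con, ih]

lemma bd_bd (c : Ch R V) : bd (bd c) = 0 := by
  refine ch_ext (f := bd ∘ₗ bd) (g := 0) ?_ c
  intro l
  simp [bd_bdl]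

lemma mp_con (f : V → W) (x : V) (c : Ch R V) : mp f (con x c) = con (f x) (mp f c) := by
  refine ch_ext (f := mp f ∘ₗ con x) (g := con (f x) ∘ₗ mp f) ?_ c
  intro l
  simp

lemma mp_bdl (f : V → W) (l : List V) : mp f (bdl R l) = bdl R (l.map f) := by
  induction l with
  | nil => simp [bdl]
  | cons x l ih => simp [bdl, mp_con, ih]

lemma bd_mp (f : V → W) (c : Ch R V) : bd (mp f c) = mp f (bd c) := by
  refine ch_ext (f := bd ∘ₗ mp f) (g := mp f ∘ₗ bd) ?_ c
  intro l
  simp [mp_bdl]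

lemma mp_mp (f : V → W) (g : W → U) (c : Ch R V) : mp g (mp f c) = mp (g ∘ f) c := by
  refine ch_ext (f := mp g ∘ₗ mp f) (g := mp (g ∘ f)) ?_ c
  intro l
  simp

/-- Chains all of whose simplices satisfy `P`. -/
abbrev sup (R : Type*) [CommRing R] {V : Type*} (P : List V → Prop) : Submodule R (Ch R V) :=
  Finsupp.supported R R {l | P l}

lemma single_mem_sup {P : List V → Prop} {l : List V} (h : P l) (r : R) :
    single l r ∈ sup R P := Finsupp.single_mem_supported R r h

lemma sup_mono {P Q : List V → Prop} (h : ∀ l, P l → Q l) : sup R P ≤ sup R Q :=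
  Finsupp.supported_mono h

/-- A linear map that sends every simplex satisfying `P` into a submodule sends all of `sup R P`
there. -/
lemma map_sup {M : Type*} [AddCommGroup M] [Module R M] {P : List V → Prop} (f : Ch R V →ₗ[R] M)
    (N : Submodule R M) (h : ∀ l, P l → f (single l 1) ∈ N) {c : Ch R V} (hc : c ∈ sup R P) :
    f c ∈ N := by
  rw [sup, Finsupp.supported_eq_span_single] at hc
  induction hc using Submodule.span_induction with
  | mem x hx => obtain ⟨l, hl, rfl⟩ := hx; exact h l hl
  | zero => simp
  | add x y _ _ hx hy => rw [map_add]; exact N.add_mem hx hy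
  | smul r x _ hx => rw [map_smul]; exact N.smul_mem r hx

/-- Two linear maps agreeing on simplices satisfying `P` agree on `sup R P`. -/
lemma eq_on_sup {M : Type*} [AddCommGroup M] [Module R M] {P : List V → Prop}
    (f g : Ch R V →ₗ[R] M) (h : ∀ l, P l → f (single l 1) = g (single l 1))
    {c : Ch R V} (hc : c ∈ sup R P) : f c = g c := by
  have := map_sup (f - g) ⊥ (fun l hl => by simp [h l hl]) hc
  simpa [sub_eq_zero] using this

lemma con_mem_sup {P Q : List V → Prop} (x : V) (h : ∀ l, P l → Q (x :: l)) {c : Ch R V}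
    (hc : c ∈ sup R P) : con x c ∈ sup R Q :=
  map_sup (con x) _ (fun l hl => by rw [con_single]; exact single_mem_sup (h l hl) _) hc

lemma mp_mem_sup {P : List V → Prop} {Q : List W → Prop} (f : V → W)
    (h : ∀ l, P l → Q (l.map f)) {c : Ch R V} (hc : c ∈ sup R P) : mp f c ∈ sup R Q :=
  map_sup (mp f) _ (fun l hl => by rw [mp_single]; exact single_mem_sup (h l hl) _) hc

/-- The faces of a simplex are sublists with one vertex fewer. -/
lemma bdl_mem (l : List V) :
    bdl R l ∈ sup R (fun l' => l'.Sublist l ∧ l'.length + 1 = l.length) := by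
  induction l with
  | nil => simp [bdl]
  | cons x l ih =>
    refine Submodule.sub_mem _ (single_mem_sup (by simp) 1) (con_mem_sup x ?_ ih)
    rintro l' ⟨h1, h2⟩
    exact ⟨h1.cons_cons x, by simp [h2]⟩

lemma bd_mem_len {n : ℕ} {c : Ch R V} (hc : c ∈ sup R (fun l => l.length = n + 1)) :
    bd c ∈ sup R (fun l : List V => l.length = n) := by
  refine map_sup bd _ (fun l hl => ?_) hc
  rw [bd_single, one_smul]
  exact sup_mono (fun l' h => by omega) (bdl_mem l)

end chains

/-! ### Recursive cone constructions -/

section cone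
variable {R : Type*} [CommRing R] {V W : Type*}

/-- Auxiliary form of `cone` on lists of length at most `k`. -/
def coneF (a : List V → W) (A : List V → Ch R W) (z : Ch R W) (s : R) : ℕ → List V → Ch R W
  | 0, _ => z
  | k + 1, l => con (a l) (A l + s • Finsupp.linearCombination R (coneF a A z s k) (bdl R l))

/-- The linear operator `K` on chains with `K [] = z` and, for a nonempty simplex `l`,
`K l = a l · (A l + s K (∂ l))`, the cone with apex `a l`. Barycentric subdivision and chain
homotopies into acyclic complexes are both of this form. -/
def cone (a : List V → W) (A : List V → Ch R W) (z : Ch R W) (s : R) : Ch R V →ₗ[R] Ch R W :=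
  Finsupp.linearCombination R (fun l => coneF a A z s l.length l)

lemma cone_nil (a : List V → W) (A : List V → Ch R W) (z : Ch R W) (s : R) :
    cone a A z s (single [] 1) = z := by
  simp [cone, coneF]

lemma cone_single (a : List V → W) (A : List V → Ch R W) (z : Ch R W) (s : R) {l : List V}
    (hl : l ≠ []) :
    cone a A z s (single l 1) = con (a l) (A l + s • cone a A z s (bdl R l)) := by
  obtain ⟨x, l, rfl⟩ := List.exists_cons_of_ne_nil hl
  simp only [cone, Finsupp.linearCombination_single, one_smul, List.length_cons, coneF]
  congr 3
  refine eq_on_sup _ _ ?_ (bdl_mem (R := R) (x :: l))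
  rintro l' ⟨-, h⟩
  have : l'.length = l.length := by simpa using h
  simp [this]

end cone
end TTW

/-! ### Barycentric subdivision -/

namespace TTW

open Finsupp

section subdivision
variable {R : Type*} [CommRing R] {E E' : Type*} [NormedAddCommGroup E] [NormedSpace ℝ E]
  [NormedAddCommGroup E'] [NormedSpace ℝ E']

/-- The barycenter of a list of points. -/
def bary (l : List E) : E := (l.length : ℝ)⁻¹ • l.sum

/-- Barycentric subdivision of ordered affine chains. -/
def sd : Ch R E →ₗ[R] Ch R E := cone bary 0 (single [] 1) 1

lemma sd_nil : sd (single ([] : List E) (1 : R)) = single [] 1 := cone_nil _ _ _ _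

lemma sd_single {l : List E} (hl : l ≠ []) :
    sd (single l (1 : R)) = con (bary l) (sd (bdl R l)) := by
  rw [sd, cone_single _ _ _ _ hl]; simp

lemma bd_sd_single (n : ℕ) : ∀ l : List E, l.length = n →
    bd (sd (single l (1 : R))) = sd (bdl R l) := by
  induction n with
  | zero =>
    intro l hl
    obtain rfl := List.length_eq_zero_iff.1 hl
    simp [sd_nil, bdl]
  | succ n ih =>
    intro l hl
    have hl0 : l ≠ [] := by rintro rfl; simp at hl
    rw [sd_single hl0, bd_con]
    have h := eq_on_sup (bd ∘ₗ sd) (sd ∘ₗ bd) (P := fun l : List E => l.length = n)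
      (fun l' h' => by simpa using ih l' h')
      (sup_mono (fun l' h => by omega) (bdl_mem (R := R) l))
    simp only [LinearMap.comp_apply] at h
    rw [h, bd_bdl]
    simp

lemma bd_sd (c : Ch R E) : bd (sd c) = sd (bd c) :=
  ch_ext (f := bd ∘ₗ sd) (g := sd ∘ₗ bd) (fun l => by simpa using bd_sd_single l.length l rfl) c

lemma bary_map (ρ : E →ₗ[ℝ] E') (l : List E) : bary (l.map ρ) = ρ (bary l) := by
  simp [bary, map_list_sum]

lemma sd_mp_single (ρ : E →ₗ[ℝ] E') (n : ℕ) : ∀ l : List E, l.length = n →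
    sd (single (l.map ρ) (1 : R)) = mp ρ (sd (single l 1)) := by
  induction n with
  | zero =>
    intro l hl
    obtain rfl := List.length_eq_zero_iff.1 hl
    simp [sd_nil]
  | succ n ih =>
    intro l hl
    have hl0 : l ≠ [] := by rintro rfl; simp at hl
    rw [sd_single hl0, sd_single (by simpa using hl0), mp_con, bary_map, ← mp_bdl]
    congr 1
    exact eq_on_sup (sd ∘ₗ mp ρ) (mp ρ ∘ₗ sd) (P := fun l : List E => l.length = n)
      (fun l' h' => by simpa using ih l' h')
      (sup_mono (fun l' h => by omega) (bdl_mem (R := R) l))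

lemma sd_mp (ρ : E →ₗ[ℝ] E') (c : Ch R E) : sd (mp ρ c) = mp ρ (sd c) :=
  ch_ext (f := sd ∘ₗ mp ρ) (g := mp ρ ∘ₗ sd)
    (fun l => by simpa using sd_mp_single ρ l.length l rfl) c

lemma norm_sum_sub_le (v : E) (D : ℝ) (l : List E) (h : ∀ x ∈ l, dist x v ≤ D) :
    ‖l.sum - (l.length : ℝ) • v‖ ≤ l.length * D := by
  induction l with
  | nil => simp
  | cons x l ih =>
    have h1 := ih (fun y hy => h y (by simp [hy]))
    have h2 : ‖x - v‖ ≤ D := by rw [← dist_eq_norm]; exact h x (by simp)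
    have : (x :: l).sum - ((x :: l).length : ℝ) • v
        = (x - v) + (l.sum - (l.length : ℝ) • v) := by
      simp only [List.sum_cons, List.length_cons, Nat.cast_add, Nat.cast_one, add_smul, one_smul]
      abel
    rw [this]
    refine (norm_add_le _ _).trans ?_
    simp only [List.length_cons, Nat.cast_add, Nat.cast_one]
    linarith

/-- The vertex `v` itself contributes nothing to the distance from the barycenter to `v`; this is
what makes the mesh shrink. -/
lemma dist_bary_le {l : List E} {D : ℝ} {N : ℕ} (hD : 0 ≤ D) (hN : l.length ≤ N)
    (h : ∀ x ∈ l, ∀ y ∈ l, dist x y ≤ D) {v : E} (hv : v ∈ l) :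
    dist v (bary l) ≤ (1 - (N : ℝ)⁻¹) * D := by
  obtain ⟨s, t, rfl⟩ := List.append_of_mem hv
  have h1 := norm_sum_sub_le v D (s ++ t) (fun x hx => h x (by
    rw [List.mem_append] at hx; rw [List.mem_append, List.mem_cons]; tauto) v hv)
  set k : ℝ := ((s ++ t).length : ℝ) with hk
  have hk0 : 0 ≤ k := by positivity
  have hlen : ((s ++ v :: t).length : ℝ) = k + 1 := by
    simp [hk]; ring
  have hNk : k + 1 ≤ N := by rw [← hlen]; exact_mod_cast hN
  have e : bary (s ++ v :: t) - v = (k + 1)⁻¹ • ((s ++ t).sum - k • v) := by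
    rw [bary, hlen]
    have : (s ++ v :: t).sum = (s ++ t).sum + v := by simp; abel
    rw [this]
    have hk1 : k + 1 ≠ 0 := by positivity
    have : v = (k + 1)⁻¹ • ((k + 1) • v) := by rw [smul_smul, inv_mul_cancel₀ hk1, one_smul]
    nth_rw 2 [this]
    rw [← smul_sub]
    congr 1
    rw [add_smul, one_smul]; abel
  rw [dist_comm, dist_eq_norm, e, norm_smul, Real.norm_of_nonneg (by positivity)]
  have h3 : (k + 1)⁻¹ * ‖(s ++ t).sum - k • v‖ ≤ (k + 1)⁻¹ * (k * D) := by gcongr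
  refine h3.trans ?_
  rw [← mul_assoc]
  gcongr
  have : (N : ℝ)⁻¹ ≤ (k + 1)⁻¹ := inv_anti₀ (by positivity) hNk
  have h4 : (k + 1)⁻¹ * k = 1 - (k + 1)⁻¹ := by field_simp; ring
  linarith

lemma bary_mem_hull {l : List E} (hl : l ≠ []) : bary l ∈ convexHull ℝ {x | x ∈ l} := by
  have key : ∀ l : List E, ∀ S : Set E, Convex ℝ S → (∀ x ∈ l, x ∈ S) → l ≠ [] →
      bary l ∈ S := by
    intro l S hS h hl
    have h1 : ∑ i : Fin l.length, ((l.length : ℝ)⁻¹) • l.get i ∈ S := by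
      refine hS.sum_mem (fun _ _ => by positivity) ?_ (fun i _ => h _ (List.get_mem l i))
      have : l.length ≠ 0 := by simpa using hl
      simp [this]
    rw [← Finset.smul_sum] at h1
    rw [← List.sum_ofFn, List.ofFn_get] at h1
    exact h1
  exact key l _ (convex_convexHull ℝ _) (fun x hx => subset_convexHull ℝ _ hx) hl

/-- The shape of the simplices in a subdivision: mesh at most `D`, contained in `convexHull S`. -/
def Small (S : Set E) (n : ℕ) (D : ℝ) (l : List E) : Prop :=
  l.length = n ∧ (∀ x ∈ l, x ∈ convexHull ℝ S) ∧ ∀ x ∈ l, ∀ y ∈ l, dist x y ≤ D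

lemma sd_small_single {N : ℕ} {D : ℝ} (hD : 0 ≤ D) (hN1 : 1 ≤ N) (n : ℕ) (hN : n ≤ N) :
    ∀ l : List E, l.length = n → (∀ x ∈ l, ∀ y ∈ l, dist x y ≤ D) →
    sd (single l (1 : R)) ∈ sup R (Small {x | x ∈ l} n ((1 - (N : ℝ)⁻¹) * D)) := by
  have hc : 0 ≤ (1 - (N : ℝ)⁻¹) * D := by
    have : (N : ℝ)⁻¹ ≤ 1 := inv_le_one_of_one_le₀ (by exact_mod_cast hN1)
    exact mul_nonneg (by linarith) hD
  induction n with
  | zero =>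
    intro l hl _
    obtain rfl := List.length_eq_zero_iff.1 hl
    rw [sd_nil]
    exact single_mem_sup (by simp [Small]) _
  | succ n ih =>
    intro l hl h
    have hl0 : l ≠ [] := by rintro rfl; simp at hl
    rw [sd_single hl0]
    have h1 : sd (bdl R l) ∈ sup R (Small {x | x ∈ l} n ((1 - (N : ℝ)⁻¹) * D)) := by
      refine map_sup sd _ ?_ (bdl_mem (R := R) l)
      rintro l' ⟨hs, hlen⟩
      refine sup_mono ?_ (ih (by omega) l' (by omega)
        (fun x hx y hy => h x (hs.subset hx) y (hs.subset hy)))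
      rintro l'' ⟨a, b, c⟩
      exact ⟨a, fun x hx => convexHull_mono (fun y hy => hs.subset hy) (b x hx), c⟩
    refine con_mem_sup _ ?_ h1
    rintro l' ⟨a, b, c⟩
    have hb : ∀ y ∈ l', dist y (bary l) ≤ (1 - (N : ℝ)⁻¹) * D := by
      intro y hy
      have : convexHull ℝ {x | x ∈ l} ⊆ Metric.closedBall (bary l) ((1 - (N : ℝ)⁻¹) * D) :=
        convexHull_min (fun v hv => dist_bary_le hD (by omega) h hv) (convex_closedBall _ _)
      exact this (b y hy)
    refine ⟨by simp [a], ?_, ?_⟩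
    · intro x hx
      rcases List.mem_cons.1 hx with rfl | hx
      · exact bary_mem_hull hl0
      · exact b x hx
    · intro x hx y hy
      rcases List.mem_cons.1 hx with rfl | hx <;> rcases List.mem_cons.1 hy with rfl | hy
      · simpa using hc
      · rw [dist_comm]; exact hb y hy
      · exact hb x hx
      · exact c x hx y hy

/-- Iterated barycentric subdivision. -/
def sdk (R : Type*) [CommRing R] (E : Type*) [NormedAddCommGroup E] [NormedSpace ℝ E] (k : ℕ) :
    Ch R E →ₗ[R] Ch R E := (sd : Module.End R (Ch R E)) ^ k

lemma sdk_zero (c : Ch R E) : sdk R E 0 c = c := by simp [sdk]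

lemma sdk_succ (k : ℕ) (c : Ch R E) : sdk R E (k + 1) c = sd (sdk R E k c) := by
  simp [sdk, pow_succ']

lemma sdk_nil (k : ℕ) : sdk R E k (single [] 1) = single [] 1 := by
  induction k with
  | zero => simp [sdk_zero]
  | succ k ih => rw [sdk_succ, ih, sd_nil]

lemma bd_sdk (k : ℕ) (c : Ch R E) : bd (sdk R E k c) = sdk R E k (bd c) := by
  induction k with
  | zero => simp [sdk_zero]
  | succ k ih => rw [sdk_succ, sdk_succ, bd_sd, ih]

lemma sdk_mp (ρ : E →ₗ[ℝ] E') (k : ℕ) (c : Ch R E) : sdk R E' k (mp ρ c) = mp ρ (sdk R E k c) := by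
  induction k with
  | zero => simp [sdk_zero]
  | succ k ih => rw [sdk_succ, sdk_succ, ih, sd_mp]

lemma sdk_small {N : ℕ} {D : ℝ} (hD : 0 ≤ D) (hN1 : 1 ≤ N) {n : ℕ} (hN : n ≤ N) (S : Set E)
    (l : List E) (hl : Small S n D l) (k : ℕ) :
    sdk R E k (single l 1) ∈ sup R (Small S n ((1 - (N : ℝ)⁻¹) ^ k * D)) := by
  have h01 : 0 ≤ 1 - (N : ℝ)⁻¹ := by
    have : (N : ℝ)⁻¹ ≤ 1 := inv_le_one_of_one_le₀ (by exact_mod_cast hN1)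
    linarith
  induction k with
  | zero => simpa [sdk_zero] using single_mem_sup hl (1 : R)
  | succ k ih =>
    rw [sdk_succ]
    refine map_sup sd _ ?_ ih
    rintro l' ⟨a, b, c⟩
    refine sup_mono ?_ (sd_small_single (by positivity) hN1 n hN l' a c)
    rintro l'' ⟨a', b', c'⟩
    refine ⟨a', fun x hx => ?_, by rw [pow_succ', mul_assoc]; exact c'⟩
    exact convexHull_min (fun y hy => b y hy) (convex_convexHull ℝ S) (b' x hx)

end subdivision
end TTW

/-! ### The fundamental chain of a product of joins -/

namespace TTW

open Finsupp

section cycle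
variable {p : ℕ} [NeZero p] {I : Type*} [Fintype I] [DecidableEq I]

/-- Vertices: for each index `i` a level and a group label. A vertex stands for the product of the
vertices labelled `(v i).2` in the `(v i).1`-st copy of `ℤ/p` in the `i`-th join. -/
abbrev Vt (p : ℕ) (I : Type*) := I → ℕ × ZMod p

/-- Translation of a vertex by a group element. -/
def tr (g : I → ZMod p) (v : Vt p I) : Vt p I := fun i => ((v i).1, (v i).2 + g i)

/-- Coefficients of the differential of the minimal periodic resolution of `ℤ/p`, alternating
between the norm element and `1 - t`. -/
def T (j : ℕ) (s : ZMod p) : ZMod p :=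
  if Even j then 1 else (if s = 0 then 1 else 0) - (if s = -1 then 1 else 0)

lemma T_sum (j : ℕ) : ∑ s : ZMod p, T j s = 0 := by
  unfold T
  split_ifs <;> simp

lemma T_T (j : ℕ) (a : ZMod p) : ∑ s : ZMod p, T j s * T (j + 1) (a - s) = 0 := by
  by_cases h : Even j
  · have h' : ¬ Even (j + 1) := by simpa [Nat.even_add_one] using h
    simp only [T, h, h', if_true, if_false, one_mul, Finset.sum_sub_distrib]
    have e1 : ∀ s : ZMod p, (a - s = 0) ↔ (s = a) := fun s => by
      rw [sub_eq_zero]; exact eq_comm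
    have e2 : ∀ s : ZMod p, (a - s = -1) ↔ (s = a + 1) := fun s => by
      constructor
      · intro h; linear_combination -h
      · rintro rfl; ring
    simp [e1, e2]
  · have h' : Even (j + 1) := by simpa [Nat.even_add_one] using h
    simp [T, h, h']

/-- Raise the `i`-th level by one and shift the label by `s`. -/
def step (v : Vt p I) (i : I) (s : ZMod p) : Vt p I :=
  Function.update v i ((v i).1 + 1, (v i).2 + s)

lemma step_step_ne (v : Vt p I) {i j : I} (h : i ≠ j) (s s' : ZMod p) :
    step (step v i s) j s' = step (step v j s') i s := by
  unfold step
  rw [Function.update_of_ne h.symm, Function.update_of_ne h, Function.update_comm h]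

lemma step_step_eq (v : Vt p I) (i : I) (s s' : ZMod p) :
    step (step v i s) i s' = step (step v i 0) i (s + s') := by
  simp [step, add_assoc]

lemma tr_step (g : I → ZMod p) (v : Vt p I) (i : I) (s : ZMod p) :
    tr g (step v i s) = step (tr g v) i s := by
  funext k
  by_cases h : k = i
  · subst h; simp [tr, step]; ring
  · simp [tr, step, h]

lemma step_eq_tr (v : Vt p I) (i : I) (s : ZMod p) :
    step v i s = tr (Pi.single i s) (step v i 0) := by
  funext k
  by_cases h : k = i
  · subst h; simp [tr, step]
  · simp [tr, step, h]

variable (rk : I → ℕ) (n : I → ℕ)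

/-- The Koszul sign of raising the `i`-th level. -/
def sgn (v : Vt p I) (i : I) : ZMod p := (-1) ^ ∑ k with rk k < rk i, (v k).1

/-- The coefficient of raising the `i`-th level with shift `s`; zero at the top level `n i`. -/
def cf (v : Vt p I) (i : I) (s : ZMod p) : ZMod p :=
  if (v i).1 < n i then sgn rk v i * T (v i).1 s else 0

/-- `Y k v` is the `k`-dimensional chain of flags that start at `v` and raise one level at a time. -/
def Y : ℕ → Vt p I → Ch (ZMod p) (Vt p I)
  | 0, v => con v (single [] 1)
  | k + 1, v => con v (∑ i, ∑ s, cf rk n v i s • Y k (step v i s))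

/-- The link of `v` in `Y k v`, which is also its boundary. -/
def lk : ℕ → Vt p I → Ch (ZMod p) (Vt p I)
  | 0, _ => single [] 1
  | k + 1, v => ∑ i, ∑ s, cf rk n v i s • Y rk n k (step v i s)

lemma Y_eq (k : ℕ) (v : Vt p I) : Y rk n k v = con v (lk rk n k v) := by
  cases k <;> rfl

lemma sgn_step (v : Vt p I) (i j : I) (s : ZMod p) :
    sgn rk (step v i s) j = (if rk i < rk j then -1 else 1) * sgn rk v j := by
  unfold sgn
  by_cases h : rk i < rk j
  · have hi : i ∈ Finset.univ.filter (fun k => rk k < rk j) := by simp [h]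
    rw [if_pos h, ← Finset.add_sum_erase _ _ hi, ← Finset.add_sum_erase _ _ hi]
    have : ∑ x ∈ (Finset.univ.filter (fun k => rk k < rk j)).erase i, (step v i s x).1
        = ∑ x ∈ (Finset.univ.filter (fun k => rk k < rk j)).erase i, (v x).1 := by
      refine Finset.sum_congr rfl fun x hx => ?_
      simp [step, Function.update_of_ne (Finset.ne_of_mem_erase hx)]
    rw [this]
    simp only [step, Function.update_self]
    rw [add_right_comm, pow_succ]
    ring
  · rw [if_neg h, one_mul]
    congr 1
    refine Finset.sum_congr rfl fun x hx => ?_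
    have : x ≠ i := by rintro rfl; exact h (by simpa using hx)
    simp [step, Function.update_of_ne this]

lemma cf_anti (hrk : Function.Injective rk) (v : Vt p I) {i j : I} (h : i ≠ j) (s s' : ZMod p) :
    cf rk n v i s * cf rk n (step v i s) j s' = -(cf rk n v j s' * cf rk n (step v j s') i s) := by
  unfold cf
  rw [sgn_step, sgn_step]
  have h1 : (step v i s j) = v j := by simp [step, Function.update_of_ne h.symm]
  have h2 : (step v j s' i) = v i := by simp [step, Function.update_of_ne h]
  rw [h1, h2]
  rcases lt_or_gt_of_ne (fun hh => h (hrk hh) : rk i ≠ rk j) with h3 | h3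
  · rw [if_pos h3, if_neg (by omega : ¬ rk j < rk i)]
    split_ifs <;> ring
  · rw [if_pos h3, if_neg (by omega : ¬ rk i < rk j)]
    split_ifs <;> ring

lemma cf_step_self (v : Vt p I) (i : I) (s s' : ZMod p) :
    cf rk n v i s * cf rk n (step v i s) i s' =
      if (v i).1 + 1 < n i then T (v i).1 s * T ((v i).1 + 1) s' else 0 := by
  unfold cf
  rw [sgn_step]
  have hs : sgn rk v i * sgn rk v i = 1 := by
    unfold sgn; rw [← pow_add, ← two_mul, pow_mul]; simp
  have h1 : (step v i s i).1 = (v i).1 + 1 := by simp [step]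
  rw [h1]
  by_cases h : (v i).1 + 1 < n i
  · rw [if_pos h, if_pos (by omega), if_pos h, if_neg (lt_irrefl _)]
    linear_combination (T (v i).1 s * T ((v i).1 + 1) s') * hs
  · simp [h]

/-- A double sum that is antisymmetric off the diagonal reduces to its diagonal; this form also
covers characteristic two. -/
lemma sum_antisymm {M : Type*} [AddCommGroup M] (F : I → I → M)
    (h : ∀ i j, i ≠ j → F i j = - F j i) : ∑ i, ∑ j, F i j = ∑ i, F i i := by
  have h1 : ∑ x : I × I, (F x.1 x.2 - if x.1 = x.2 then F x.1 x.1 else 0) = 0 := by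
    refine Finset.sum_involution (fun x _ => x.swap) ?_ ?_ (by simp) (by simp)
    · rintro ⟨i, j⟩ -
      by_cases hij : i = j
      · subst hij; simp
      · simp [hij, Ne.symm hij, h i j hij]
    · rintro ⟨i, j⟩ - hne he
      obtain rfl : j = i := by simpa using congrArg Prod.fst he
      simp at hne
  rw [Finset.sum_sub_distrib, sub_eq_zero] at h1
  rw [← Fintype.sum_prod_type', h1, Fintype.sum_prod_type]
  simp

lemma bd_lk (hrk : Function.Injective rk) (k : ℕ) : ∀ v : Vt p I, bd (lk rk n k v) = 0 := by
  induction k with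
  | zero =>
    intro v
    change bd (single [] (1 : ZMod p)) = 0
    rw [bd_single, bdl, smul_zero]
  | succ k ih =>
    intro v
    have hY : ∀ v : Vt p I, bd (Y rk n k v) = lk rk n k v := fun v => by
      rw [Y_eq, bd_con, ih]; simp
    simp only [lk, map_sum, map_smul, hY]
    cases k with
    | zero =>
      simp only [lk, ← Finset.sum_smul, cf]
      have : ∑ i : I, ∑ s : ZMod p,
          (if (v i).1 < n i then sgn rk v i * T (v i).1 s else 0) = 0 := by
        refine Finset.sum_eq_zero fun i _ => ?_
        split_ifs
        · rw [← Finset.mul_sum, T_sum, mul_zero]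
        · simp
      rw [this, zero_smul]
    | succ k =>
      simp only [lk, Finset.smul_sum, smul_smul]
      have e : ∑ i, ∑ s, ∑ j, ∑ s', (cf rk n v i s * cf rk n (step v i s) j s') •
            Y rk n k (step (step v i s) j s')
          = ∑ i, ∑ j, ∑ s, ∑ s', (cf rk n v i s * cf rk n (step v i s) j s') •
            Y rk n k (step (step v i s) j s') :=
        Finset.sum_congr rfl fun i _ => Finset.sum_comm
      rw [e, sum_antisymm]
      · refine Finset.sum_eq_zero fun i _ => ?_
        simp only [cf_step_self]
        have e2 : ∀ s : ZMod p, ∑ s', (if (v i).1 + 1 < n i then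
              T (v i).1 s * T ((v i).1 + 1) s' else 0) • Y rk n k (step (step v i s) i s')
            = ∑ a, (if (v i).1 + 1 < n i then
              T (v i).1 s * T ((v i).1 + 1) (a - s) else 0) •
                Y rk n k (step (step v i 0) i a) := by
          intro s
          refine Fintype.sum_equiv (Equiv.addLeft s) _ _ fun s' => ?_
          simp [step_step_eq v i s s']
        simp only [e2]
        rw [Finset.sum_comm]
        refine Finset.sum_eq_zero fun a _ => ?_
        rw [← Finset.sum_smul]
        split_ifs
        · rw [T_T, zero_smul]
        · simp
      · intro i j hij
        rw [Finset.sum_comm, ← Finset.sum_neg_distrib]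
        refine Finset.sum_congr rfl fun s _ => ?_
        rw [← Finset.sum_neg_distrib]
        refine Finset.sum_congr rfl fun s' _ => ?_
        rw [cf_anti rk n hrk v hij, step_step_ne v hij, neg_smul]

lemma bd_Y (hrk : Function.Injective rk) (k : ℕ) (v : Vt p I) :
    bd (Y rk n k v) = lk rk n k v := by
  rw [Y_eq, bd_con, bd_lk rk n hrk]; simp

lemma cf_tr (g : I → ZMod p) (v : Vt p I) (i : I) (s : ZMod p) :
    cf rk n (tr g v) i s = cf rk n v i s := rfl

lemma Y_tr (g : I → ZMod p) (k : ℕ) : ∀ v : Vt p I,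
    Y rk n k (tr g v) = mp (tr g) (Y rk n k v) := by
  induction k with
  | zero => intro v; simp [Y]
  | succ k ih =>
    intro v
    simp only [Y, mp_con, map_sum, map_smul, cf_tr, ← tr_step, ih]

/-- `v` precedes `v'` in a flag: each coordinate is unchanged or has strictly larger level. -/
def Rel (v v' : Vt p I) : Prop := ∀ i, (v i).1 < (v' i).1 ∨ v i = v' i

lemma Rel.trans {v v' v'' : Vt p I} (h : Rel v v') (h' : Rel v' v'') : Rel v v'' := by
  intro i
  rcases h i with h | h <;> rcases h' i with h' | h'
  · left; omega
  · left; rw [← h']; exact h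
  · left; rw [h]; exact h'
  · right; rw [h, h']

lemma Rel_step (v : Vt p I) (i : I) (s : ZMod p) : Rel v (step v i s) := by
  intro k
  by_cases h : k = i
  · subst h; simp [step]
  · simp [step, h]

/-- The simplices of the ambient complex: flags with levels bounded by `n`. -/
def Good (l : List (Vt p I)) : Prop := l.Pairwise Rel ∧ ∀ v ∈ l, ∀ i, (v i).1 ≤ n i

lemma Good.sublist {l l' : List (Vt p I)} (h : Good n l) (hs : l'.Sublist l) : Good n l' :=
  ⟨h.1.sublist hs, fun v hv => h.2 v (hs.subset hv)⟩

lemma Y_mem (k : ℕ) : ∀ v : Vt p I, (∀ i, (v i).1 ≤ n i) →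
    Y rk n k v ∈ sup (ZMod p) (fun l => Good n l ∧ l.length = k + 1 ∧ ∀ v' ∈ l, v' = v ∨ Rel v v') := by
  induction k with
  | zero =>
    intro v hv
    simp only [Y, con_single]
    exact single_mem_sup (by simp [Good, hv]) _
  | succ k ih =>
    intro v hv
    refine con_mem_sup (P := fun l => Good n l ∧ l.length = k + 1 ∧ ∀ v' ∈ l, Rel v v') v ?_ ?_
    · rintro l ⟨h1, h2, h3⟩
      refine ⟨⟨List.pairwise_cons.2 ⟨h3, h1.1⟩, ?_⟩, by simp [h2], ?_⟩
      · intro v' hv'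
        rcases List.mem_cons.1 hv' with rfl | hv'
        · exact hv
        · exact h1.2 v' hv'
      · intro v' hv'
        rcases List.mem_cons.1 hv' with rfl | hv'
        · exact Or.inl rfl
        · exact Or.inr (h3 v' hv')
    · refine Submodule.sum_mem _ fun i _ => Submodule.sum_mem _ fun s _ => ?_
      by_cases hi : (v i).1 < n i
      · refine Submodule.smul_mem _ _ (sup_mono ?_ (ih (step v i s) ?_))
        · rintro l ⟨h1, h2, h3⟩
          refine ⟨h1, h2, fun v' hv' => ?_⟩
          rcases h3 v' hv' with rfl | h
          · exact Rel_step v i s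
          · exact (Rel_step v i s).trans h
        · intro k
          by_cases h : k = i
          · subst h; simpa [step] using hi
          · simpa [step, h] using hv k
      · simp [cf, hi]

end cycle
end TTW

/-! ### An equivariant cochain detects small simplices -/

namespace TTW

open Finsupp

section homotopy
variable {R : Type*} [CommRing R] {V W : Type*}

/-- The chain homotopy between `Φ` and `Ψ` obtained by coning off with apex `a l`. -/
def hty (a : List V → W) (Φ Ψ : Ch R V →ₗ[R] Ch R W) : Ch R V →ₗ[R] Ch R W :=
  cone a (fun l => Φ (single l 1) - Ψ (single l 1)) 0 (-1)

lemma hty_single (a : List V → W) (Φ Ψ : Ch R V →ₗ[R] Ch R W) {l : List V} (hl : l ≠ []) :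
    hty a Φ Ψ (single l 1) =
      con (a l) (Φ (single l 1) - Ψ (single l 1) - hty a Φ Ψ (bdl R l)) := by
  rw [hty, cone_single _ _ _ _ hl]
  simp [sub_eq_add_neg]

lemma hty_nil (a : List V → W) (Φ Ψ : Ch R V →ₗ[R] Ch R W) :
    hty a Φ Ψ (single [] 1) = 0 := cone_nil _ _ _ _

/-- The chain homotopy identity `∂ H + H ∂ = Φ - Ψ`. -/
lemma hty_spec (a : List V → W) (Φ Ψ : Ch R V →ₗ[R] Ch R W)
    (hΦ : ∀ c, bd (Φ c) = Φ (bd c)) (hΨ : ∀ c, bd (Ψ c) = Ψ (bd c))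
    (h0 : Φ (single [] 1) = Ψ (single [] 1)) (c : Ch R V) :
    bd (hty a Φ Ψ c) + hty a Φ Ψ (bd c) = Φ c - Ψ c := by
  have key : ∀ n : ℕ, ∀ l : List V, l.length = n →
      bd (hty a Φ Ψ (single l 1)) + hty a Φ Ψ (bdl R l) = Φ (single l 1) - Ψ (single l 1) := by
    intro n
    induction n with
    | zero =>
      intro l hl
      obtain rfl := List.length_eq_zero_iff.1 hl
      simp [hty_nil, bdl, h0]
    | succ n ih =>
      intro l hl
      have hl0 : l ≠ [] := by rintro rfl; simp at hl
      have h := eq_on_sup (bd ∘ₗ hty a Φ Ψ + hty a Φ Ψ ∘ₗ bd) (Φ - Ψ)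
        (P := fun l : List V => l.length = n) (fun l' h' => by simpa using ih l' h')
        (sup_mono (fun l' h => by omega) (bdl_mem (R := R) l))
      simp only [LinearMap.add_apply, LinearMap.comp_apply, bd_bdl, map_zero, add_zero,
        LinearMap.sub_apply] at h
      simp only [hty_single a Φ Ψ hl0, bd_con, map_sub, hΦ, hΨ, h, bd_single, one_smul]
      abel
  refine ch_ext (f := bd ∘ₗ hty a Φ Ψ + hty a Φ Ψ ∘ₗ bd) (g := Φ - Ψ) (fun l => ?_) c
  simpa using key l.length l rfl

lemma hty_equivariant (a : List V → W) (Φ Ψ : Ch R V →ₗ[R] Ch R W) (f : V → V) (f' : W → W)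
    (P : List V → Prop) (hP : ∀ l l' : List V, P l → l'.Sublist l → P l')
    (ha : ∀ l, l ≠ [] → a (l.map f) = f' (a l))
    (hΦ : ∀ l, P l → Φ (mp f (single l 1)) = mp f' (Φ (single l 1)))
    (hΨ : ∀ l, P l → Ψ (mp f (single l 1)) = mp f' (Ψ (single l 1)))
    {c : Ch R V} (hc : c ∈ sup R P) :
    hty a Φ Ψ (mp f c) = mp f' (hty a Φ Ψ c) := by
  have key : ∀ n : ℕ, ∀ l : List V, P l → l.length = n →
      hty a Φ Ψ (mp f (single l 1)) = mp f' (hty a Φ Ψ (single l 1)) := by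
    intro n
    induction n with
    | zero =>
      intro l _ hl
      obtain rfl := List.length_eq_zero_iff.1 hl
      simp [hty_nil]
    | succ n ih =>
      intro l hPl hl
      have hl0 : l ≠ [] := by rintro rfl; simp at hl
      have h := eq_on_sup (hty a Φ Ψ ∘ₗ mp f) (mp f' ∘ₗ hty a Φ Ψ)
        (P := fun l : List V => P l ∧ l.length = n)
        (fun l' h' => by simpa using ih l' h'.1 h'.2)
        (sup_mono (fun l' h => ⟨hP l l' hPl h.1, by omega⟩) (bdl_mem (R := R) l))
      simp only [LinearMap.comp_apply] at h
      have h1 := hΦ l hPl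
      have h2 := hΨ l hPl
      rw [mp_single] at h1 h2 ⊢
      rw [hty_single a Φ Ψ hl0, hty_single a Φ Ψ (by simpa using hl0), mp_con, ha l hl0,
        ← mp_bdl, h, h1, h2]
      simp only [map_sub]
  exact eq_on_sup (hty a Φ Ψ ∘ₗ mp f) (mp f' ∘ₗ hty a Φ Ψ) (fun l hl => key l.length l hl rfl) hc

end homotopy

section core
variable {p : ℕ} [NeZero p] {I : Type*} [Fintype I] [DecidableEq I]

/-- The base vertex. -/
def v0 : Vt p I := fun _ => (0, 0)

/-- Evaluation of a cochain on chains. -/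
def ev {Γ : Type*} (u : List Γ → ZMod p) : Ch (ZMod p) Γ →ₗ[ZMod p] ZMod p :=
  Finsupp.linearCombination (ZMod p) u

@[simp] lemma ev_single {Γ : Type*} (u : List Γ → ZMod p) (l : List Γ) (r : ZMod p) :
    ev u (single l r) = r * u l := by simp [ev]

/-- If an invariant cocycle `u` does not vanish on the image of the fundamental chain under one
equivariant labelling `ψ` of the vertices, then for every equivariant labelling of the points of
the complex `X` it is nonzero on some arbitrarily small simplex: iterated subdivision followed by
labelling is equivariantly chain homotopic to the map induced by `ψ`, and the boundary of the fundamental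
chain is a sum of full orbits, invisible modulo `p`. -/
theorem exists_small_simplex (rk n : I → ℕ) (hrk : Function.Injective rk)
    {Γ : Type*} (act : (I → ZMod p) → Γ → Γ) (u : List Γ → ZMod p)
    (hu1 : ∀ g l, u (l.map (act g)) = u l) (hu2 : ∀ l, ev u (bdl (ZMod p) l) = 0)
    {E : Type*} [NormedAddCommGroup E] [NormedSpace ℝ E]
    (ρ : (I → ZMod p) → E →ₗ[ℝ] E) (vtx : Vt p I → E) (hvtx : ∀ g v, vtx (tr g v) = ρ g (vtx v))
    (X : Set E) (hX : ∀ l, Good n l → convexHull ℝ {x | x ∈ l.map vtx} ⊆ X)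
    (D : ℝ) (hD : ∀ x ∈ X, ∀ y ∈ X, dist x y ≤ D)
    (lab : E → Γ) (hlab : ∀ g, ∀ x ∈ X, lab (ρ g x) = act g (lab x))
    (ψ : Vt p I → Γ) (hψ : ∀ g v, ψ (tr g v) = act g (ψ v))
    (K : ℕ) (hne : ev u (mp ψ (Y rk n K v0)) ≠ 0) (δ : ℝ) (hδ : 0 < δ) :
    ∃ l : List E, (∀ x ∈ l, x ∈ X) ∧ (∀ x ∈ l, ∀ y ∈ l, dist x y < δ) ∧ u (l.map lab) ≠ 0 := by
  by_contra hcon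
  push Not at hcon
  set N : ℕ := K + 1 with hN
  have hr0 : 0 ≤ 1 - (N : ℝ)⁻¹ := by
    have : (N : ℝ)⁻¹ ≤ 1 := inv_le_one_of_one_le₀ (by simp [hN])
    linarith
  have hr1 : 1 - (N : ℝ)⁻¹ < 1 := by
    have : 0 < (N : ℝ)⁻¹ := by rw [hN]; positivity
    linarith
  set D' := max D 0 with hD'
  obtain ⟨k, hk⟩ : ∃ k : ℕ, (1 - (N : ℝ)⁻¹) ^ k * D' < δ := by
    have := ((tendsto_pow_atTop_nhds_zero_of_lt_one hr0 hr1).mul_const D')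
    rw [zero_mul] at this
    exact (this.eventually (gt_mem_nhds hδ)).exists
  set Θ : Ch (ZMod p) (Vt p I) →ₗ[ZMod p] Ch (ZMod p) E := sdk (ZMod p) E k ∘ₗ mp vtx with hΘ
  have hsmall : ∀ l, Good n l → l.length ≤ N → Θ (single l 1) ∈ sup (ZMod p)
      (fun l' => (∀ x ∈ l', x ∈ X) ∧ (∀ x ∈ l', ∀ y ∈ l', dist x y < δ)) := by
    intro l hl hlN
    have h := sdk_small (R := ZMod p) (le_max_right D 0) (by omega : 1 ≤ N)
      (n := l.length) hlN {x | x ∈ l.map vtx} (l.map vtx)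
      ⟨by simp, fun x hx => subset_convexHull ℝ _ hx, fun x hx y hy =>
        (hD x (hX l hl (subset_convexHull ℝ _ hx)) y (hX l hl (subset_convexHull ℝ _ hy))).trans
          (le_max_left _ _)⟩ k
    simp only [hΘ, LinearMap.comp_apply, mp_single]
    refine sup_mono ?_ h
    rintro l' ⟨_, b, c⟩
    exact ⟨fun x hx => hX l hl (b x hx), fun x hx y hy => (c x hx y hy).trans_lt hk⟩
  -- without the length restriction only membership in `X` survives
  have hinX : ∀ l, Good n l → Θ (single l 1) ∈ sup (ZMod p) (fun l' => ∀ x ∈ l', x ∈ X) := by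
    intro l hl
    have h := sdk_small (R := ZMod p) (le_max_right D 0) (by omega : 1 ≤ l.length + 1)
      (n := l.length) (by omega) {x | x ∈ l.map vtx} (l.map vtx)
      ⟨by simp, fun x hx => subset_convexHull ℝ _ hx, fun x hx y hy =>
        (hD x (hX l hl (subset_convexHull ℝ _ hx)) y (hX l hl (subset_convexHull ℝ _ hy))).trans
          (le_max_left _ _)⟩ k
    simp only [hΘ, LinearMap.comp_apply, mp_single]
    refine sup_mono ?_ h
    rintro l' ⟨_, b, c⟩
    exact fun x hx => hX l hl (b x hx)
  set Φ : Ch (ZMod p) (Vt p I) →ₗ[ZMod p] Ch (ZMod p) Γ := mp lab ∘ₗ Θ with hΦ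
  set H := hty (fun l => ψ (l.headD v0)) Φ (mp ψ) with hH
  have hspec := hty_spec (fun l => ψ (l.headD v0)) Φ (mp ψ)
    (fun c => by simp only [hΦ, hΘ, LinearMap.comp_apply, bd_mp, bd_sdk])
    (fun c => bd_mp ψ c)
    (by simp only [hΦ, hΘ, LinearMap.comp_apply, mp_single, List.map_nil, sdk_nil])
    (Y rk n K v0)
  rw [← hH, bd_Y rk n hrk] at hspec
  have hequi : ∀ g, ∀ c ∈ sup (ZMod p) (Good n), H (mp (tr g) c) = mp (act g) (H c) := by
    intro g c hc
    refine hty_equivariant _ Φ (mp ψ) (tr g) (act g) (Good n)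
      (fun l l' h hs => h.sublist n hs) ?_ ?_ ?_ hc
    · intro l hl
      obtain ⟨x, l, rfl⟩ := List.exists_cons_of_ne_nil hl
      simp [hψ]
    · intro l hl
      have e1 : Θ (mp (tr g) (single l 1)) = mp (ρ g) (Θ (single l 1)) := by
        simp only [hΘ, LinearMap.comp_apply]
        rw [← sdk_mp, mp_mp, mp_mp]
        congr 3
        funext v
        exact hvtx g v
      simp only [hΦ, LinearMap.comp_apply]
      rw [e1]
      refine eq_on_sup (mp lab ∘ₗ mp (ρ g)) (mp (act g) ∘ₗ mp lab) ?_ (hinX l hl)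
      intro l' hl'
      simp only [LinearMap.comp_apply, mp_single, List.map_map]
      congr 1
      exact List.map_congr_left fun x hx => hlab g x (hl' x hx)
    · intro l _
      rw [mp_mp, mp_mp]
      congr 2
      funext v
      exact hψ g v
  have hinv : ∀ g c, ev u (mp (act g) c) = ev u c := fun g c =>
    ch_ext (f := ev u ∘ₗ mp (act g)) (g := ev u) (fun l => by simp [hu1]) c
  have hbd : ∀ c, ev u (bd c) = 0 := fun c =>
    ch_ext (f := ev u ∘ₗ bd) (g := 0) (fun l => by simp [hu2]) c
  have hlk : ev u (H (lk rk n K v0)) = 0 := by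
    cases K with
    | zero =>
      change ev u (H (single [] 1)) = 0
      rw [hH, hty_nil, map_zero]
    | succ K =>
      simp only [lk, map_sum, map_smul]
      refine Finset.sum_eq_zero fun i _ => ?_
      by_cases hi : 0 < n i
      · have h1 : ∀ s : ZMod p, ev u (H (Y rk n K (step v0 i s)))
            = ev u (H (Y rk n K (step v0 i 0))) := by
          intro s
          rw [step_eq_tr, Y_tr, hequi, hinv]
          refine sup_mono (fun l h => h.1) (Y_mem rk n K _ ?_)
          intro k
          by_cases h : k = i
          · subst h; simpa [step, v0, Nat.one_le_iff_ne_zero, Nat.pos_iff_ne_zero] using hi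
          · simp [step, v0, h]
        have h2 : ∀ s : ZMod p, cf rk n v0 i s = cf rk n (v0 : Vt p I) i 0 := by
          intro s
          simp [cf, v0, T]
        simp only [h1, h2, Finset.sum_const, Finset.card_univ, ZMod.card]
        rw [nsmul_eq_mul, CharP.cast_eq_zero, zero_mul]
      · simp [cf, v0, hi]
  have hfin : ev u (Φ (Y rk n K v0)) = 0 := by
    have h1 : Y rk n K (v0 : Vt p I) ∈ sup (ZMod p) (fun l => Good n l ∧ l.length ≤ N) :=
      sup_mono (fun l h => ⟨h.1, by omega⟩) (Y_mem rk n K v0 (fun i => by simp [v0]))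
    have h2 := map_sup Θ _ (fun l hl => hsmall l hl.1 hl.2) h1
    have h3 := map_sup (ev u ∘ₗ mp lab) ⊥ (fun l hl => by
      simp only [LinearMap.comp_apply, mp_single, ev_single, one_mul, Submodule.mem_bot]
      exact hcon l hl.1 hl.2) h2
    simpa [hΦ] using h3
  have := congrArg (ev u) hspec
  rw [map_add, map_sub, hbd, hlk, hfin] at this
  exact hne (by simpa using this)

end core
end TTW

/-! ### Products of Euler cocycles and their values on the fundamental chain -/

namespace TTW

open Finsupp

section lead
variable {p : ℕ} {I B : Type*} [Fintype I] [DecidableEq I] (χ : B → I → ZMod p)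

/-- The coefficient of the monomial with exponents `m` in the product of the linear forms with
coefficients `χ b`, computed one factor at a time; meaningful if the exponents add up to the number
of factors. -/
def W : List B → (I → ℕ) → ZMod p
  | [], _ => 1
  | b :: bs, m => ∑ i, if 0 < m i then χ b i * W bs (Function.update m i (m i - 1)) else 0

variable (lead : B → I) (wt : I → ℕ)

lemma sum_update (m : I → ℕ) (i : I) (hi : 0 < m i) :
    ∑ k, wt k * Function.update m i (m i - 1) k + wt i = ∑ k, wt k * m k := by
  have e : ∀ m : I → ℕ, ∑ k, wt k * m k = wt i * m i + ∑ k ∈ Finset.univ.erase i, wt k * m k :=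
    fun m => (Finset.add_sum_erase _ _ (Finset.mem_univ i)).symm
  rw [e, e m, Function.update_self, Finset.sum_congr rfl (fun k hk => by
    rw [Function.update_of_ne (Finset.ne_of_mem_erase hk)])]
  obtain ⟨t, ht⟩ : ∃ t, m i = t + 1 := ⟨m i - 1, by omega⟩
  rw [ht]
  simp
  ring

/-- Monomials of weight below that of the leading monomial do not occur. -/
lemma W_eq_zero (hlead : ∀ b i, i ≠ lead b → χ b i ≠ 0 → wt (lead b) < wt i) (bs : List B) :
    ∀ m : I → ℕ, ∑ k, wt k * m k < (bs.map fun b => wt (lead b)).sum → W χ bs m = 0 := by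
  induction bs with
  | nil => intro m h; simp at h
  | cons b bs ih =>
    intro m h
    rw [W]
    refine Finset.sum_eq_zero fun i _ => ?_
    split_ifs with hi
    · by_cases hc : χ b i = 0
      · simp [hc]
      · rw [ih, mul_zero]
        have h1 := sum_update wt m i hi
        have h2 : wt (lead b) ≤ wt i := by
          by_cases hl : i = lead b
          · rw [hl]
          · exact (hlead b i hl hc).le
        simp only [List.map_cons, List.sum_cons] at h
        omega
    · rfl

/-- The monomial of the leading indices arises in one way only, because the leading index of each
form has the strictly smallest weight. -/
lemma W_eq_prod (hlead : ∀ b i, i ≠ lead b → χ b i ≠ 0 → wt (lead b) < wt i) (bs : List B) :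
    ∀ m : I → ℕ, (∀ i, m i = (bs.map lead).count i) →
      W χ bs m = (bs.map fun b => χ b (lead b)).prod := by
  induction bs with
  | nil => intro m h; simp [W]
  | cons b bs ih =>
    intro m h
    have hb : 0 < m (lead b) := by rw [h]; simp
    have hupd : ∀ i, Function.update m (lead b) (m (lead b) - 1) i = (bs.map lead).count i := by
      intro i
      by_cases hi : i = lead b
      · subst hi; simp [h]
      · simp [hi, h, Ne.symm hi]
    have hsum : ∑ k, wt k * m k = wt (lead b) + (bs.map fun b => wt (lead b)).sum := by
      rw [← sum_update wt m (lead b) hb]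
      simp only [hupd]
      have : ∀ l : List I, ∑ k, wt k * l.count k = (l.map wt).sum := by
        intro l
        induction l with
        | nil => simp
        | cons a l ih =>
          simp only [List.count_cons, mul_add, Finset.sum_add_distrib, ih, List.map_cons,
            List.sum_cons]
          simp [add_comm]
      rw [this, List.map_map, add_comm]
      rfl
    rw [W, Finset.sum_eq_single (lead b)]
    · rw [if_pos hb, ih _ hupd]; simp
    · intro i _ hi
      split_ifs with hm
      · by_cases hc : χ b i = 0
        · simp [hc]
        · rw [W_eq_zero χ lead wt hlead, mul_zero]
          have := sum_update wt m i hm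
          have := hlead b i hi hc
          omega
      · rfl
    · simp

end lead

section cocycles
variable {p : ℕ} [NeZero p] {B Λ : Type*}

/-- The product of the one-dimensional cocycles pulled back from `κ` through the coordinates in
the list. -/
def u1 (κ : Λ → Λ → ZMod p) : List B → List (B → Λ) → ZMod p
  | [], [_] => 1
  | b :: bs, x :: y :: l => κ (x b) (y b) * u1 κ bs (y :: l)
  | _, _ => 0

/-- The product of the two-dimensional cocycles pulled back from `κ` through the coordinates in
the list. -/
def u2 (κ : Λ → Λ → Λ → ZMod p) : List B → List (B → Λ) → ZMod p
  | [], [_] => 1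
  | b :: bs, x :: y :: z :: l => κ (x b) (y b) (z b) * u2 κ bs (z :: l)
  | _, _ => 0

lemma u1_con (κ : Λ → Λ → ZMod p) (b : B) (bs : List B) (x y : B → Λ) (c : Ch (ZMod p) (B → Λ)) :
    ev (u1 κ (b :: bs)) (con x (con y c)) = κ (x b) (y b) * ev (u1 κ bs) (con y c) :=
  ch_ext (f := ev (u1 κ (b :: bs)) ∘ₗ con x ∘ₗ con y)
    (g := κ (x b) (y b) • (ev (u1 κ bs) ∘ₗ con y)) (fun l => by simp [u1]) c

lemma u2_con (κ : Λ → Λ → Λ → ZMod p) (b : B) (bs : List B) (x y z : B → Λ)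
    (c : Ch (ZMod p) (B → Λ)) :
    ev (u2 κ (b :: bs)) (con x (con y (con z c)))
      = κ (x b) (y b) (z b) * ev (u2 κ bs) (con z c) :=
  ch_ext (f := ev (u2 κ (b :: bs)) ∘ₗ con x ∘ₗ con y ∘ₗ con z)
    (g := κ (x b) (y b) (z b) • (ev (u2 κ bs) ∘ₗ con z)) (fun l => by simp [u2]) c

lemma u1_cocycle (κ : Λ → Λ → ZMod p) (hκ : ∀ x y z, κ y z - κ x z + κ x y = 0) (bs : List B) :
    ∀ l, ev (u1 κ bs) (bdl (ZMod p) l) = 0 := by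
  induction bs with
  | nil =>
    rintro (_ | ⟨x, _ | ⟨y, _ | ⟨z, l⟩⟩⟩)
    · simp [bdl]
    · simp [bdl, u1]
    · simp [bdl, u1]
    · have : ∀ c : Ch (ZMod p) (B → Λ), ev (u1 κ []) (con x (con y c)) =
          ev (u1 κ []) (con x (con y (0 : Ch (ZMod p) (B → Λ)))) := fun c => by
        have := ch_ext (f := ev (u1 κ ([] : List B)) ∘ₗ con x ∘ₗ con y) (g := 0)
          (fun l => by simp [u1]) c
        simpa using this
      simp only [bdl, map_sub, this]
      simp [u1]
  | cons b bs ih =>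
    rintro (_ | ⟨x, _ | ⟨y, _ | ⟨z, l⟩⟩⟩)
    · simp [bdl]
    · simp [bdl, u1]
    · simp [bdl, u1]
    · have h := ih (y :: z :: l)
      rw [bdl, map_sub, sub_eq_zero] at h
      rw [bdl, bdl, map_sub, map_sub, map_sub, u1_con, ← h]
      simp only [ev_single, con_single, u1, one_mul]
      linear_combination (u1 κ bs (z :: l)) * hκ (x b) (y b) (z b)

lemma u2_cocycle (κ : Λ → Λ → Λ → ZMod p)
    (hκ : ∀ x y z t, κ y z t - κ x z t + κ x y t - κ x y z = 0) (bs : List B) :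
    ∀ l, ev (u2 κ bs) (bdl (ZMod p) l) = 0 := by
  induction bs with
  | nil =>
    rintro (_ | ⟨x, _ | ⟨y, _ | ⟨z, l⟩⟩⟩)
    · simp [bdl]
    · simp [bdl, u2]
    · simp [bdl, u2]
    · have : ∀ c : Ch (ZMod p) (B → Λ), ev (u2 κ []) (con x (con y c)) =
          ev (u2 κ []) (con x (con y (0 : Ch (ZMod p) (B → Λ)))) := fun c => by
        have := ch_ext (f := ev (u2 κ ([] : List B)) ∘ₗ con x ∘ₗ con y) (g := 0)
          (fun l => by simp [u2]) c
        simpa using this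
      simp only [bdl, map_sub, this]
      simp [u2]
  | cons b bs ih =>
    rintro (_ | ⟨x, _ | ⟨y, _ | ⟨z, _ | ⟨t, l⟩⟩⟩⟩)
    · simp [bdl]
    · simp [bdl, u2]
    · simp [bdl, u2]
    · simp [bdl, u2]
    · have h := ih (z :: t :: l)
      rw [bdl, map_sub, sub_eq_zero] at h
      simp only [bdl] at h ⊢
      simp only [map_sub, u2_con] at h ⊢
      simp only [ev_single, con_single, u2, one_mul] at h ⊢
      linear_combination (u2 κ bs (t :: l)) * hκ (x b) (y b) (z b) (t b) + κ (x b) (y b) (z b) * h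

lemma u1_map (κ : Λ → Λ → ZMod p) (f : B → Λ → Λ) (hκ : ∀ b x y, κ (f b x) (f b y) = κ x y)
    (bs : List B) : ∀ l, u1 κ bs (l.map fun x b => f b (x b)) = u1 κ bs l := by
  induction bs with
  | nil => rintro (_ | ⟨x, _ | ⟨y, l⟩⟩) <;> simp [u1]
  | cons b bs ih =>
    rintro (_ | ⟨x, _ | ⟨y, l⟩⟩)
    · simp [u1]
    · simp [u1]
    · have := ih (y :: l)
      simp only [List.map_cons] at this
      simp only [List.map_cons, u1, hκ, this]

lemma u2_map (κ : Λ → Λ → Λ → ZMod p) (f : B → Λ → Λ)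
    (hκ : ∀ b x y z, κ (f b x) (f b y) (f b z) = κ x y z)
    (bs : List B) : ∀ l, u2 κ bs (l.map fun x b => f b (x b)) = u2 κ bs l := by
  induction bs with
  | nil => rintro (_ | ⟨x, _ | ⟨y, l⟩⟩) <;> simp [u2]
  | cons b bs ih =>
    rintro (_ | ⟨x, _ | ⟨y, _ | ⟨z, l⟩⟩⟩)
    · simp [u2]
    · simp [u2]
    · simp [u2]
    · have := ih (z :: l)
      simp only [List.map_cons] at this
      simp only [List.map_cons, u2, hκ, this]

lemma u1_ne_zero (κ : Λ → Λ → ZMod p) (bs : List B) : ∀ l, u1 κ bs l ≠ 0 → ∀ b ∈ bs,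
    ∃ x ∈ l, ∃ y ∈ l, κ (x b) (y b) ≠ 0 := by
  induction bs with
  | nil => simp
  | cons b bs ih =>
    rintro (_ | ⟨x, _ | ⟨y, l⟩⟩) h b' hb'
    · simp [u1] at h
    · simp [u1] at h
    · rw [u1] at h
      rcases List.mem_cons.1 hb' with rfl | hb'
      · exact ⟨x, by simp, y, by simp, left_ne_zero_of_mul h⟩
      · obtain ⟨x', hx', y', hy', hk⟩ := ih (y :: l) (right_ne_zero_of_mul h) b' hb'
        exact ⟨x', List.mem_cons_of_mem _ hx', y', List.mem_cons_of_mem _ hy', hk⟩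

lemma u2_ne_zero (κ : Λ → Λ → Λ → ZMod p) (bs : List B) : ∀ l, u2 κ bs l ≠ 0 → ∀ b ∈ bs,
    ∃ x ∈ l, ∃ y ∈ l, ∃ z ∈ l, κ (x b) (y b) (z b) ≠ 0 := by
  induction bs with
  | nil => simp
  | cons b bs ih =>
    rintro (_ | ⟨x, _ | ⟨y, _ | ⟨z, l⟩⟩⟩) h b' hb'
    · simp [u2] at h
    · simp [u2] at h
    · simp [u2] at h
    · rw [u2] at h
      rcases List.mem_cons.1 hb' with rfl | hb'
      · exact ⟨x, by simp, y, by simp, z, by simp, left_ne_zero_of_mul h⟩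
      · obtain ⟨x', hx', y', hy', z', hz', hk⟩ := ih (z :: l) (right_ne_zero_of_mul h) b' hb'
        have : ∀ w ∈ z :: l, w ∈ x :: y :: z :: l := fun w hw => by
          simp only [List.mem_cons] at hw ⊢; tauto
        exact ⟨x', this _ hx', y', this _ hy', z', this _ hz', hk⟩

end cocycles

section values
variable {p : ℕ} [NeZero p] {I : Type*} [Fintype I] [DecidableEq I] {B Λ : Type*}
  [AddCommGroup Λ] (θ : ZMod p →+ Λ) (χ : B → I → ZMod p) (rk n : I → ℕ)

/-- The action on labels: translation of the coordinate `b` through the character `χ b`. -/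
def act (g : I → ZMod p) (x : B → Λ) : B → Λ := fun b => x b + θ (∑ i, χ b i * g i)

/-- The model labelling of the vertices. -/
def psi (v : Vt p I) : B → Λ := fun b => θ (∑ i, χ b i * (v i).2)

lemma psi_tr (g : I → ZMod p) (v : Vt p I) : psi θ χ (tr g v) = act θ χ g (psi θ χ v) := by
  funext b
  simp [psi, act, tr, mul_add, Finset.sum_add_distrib]

lemma psi_step (v : Vt p I) (i : I) (s : ZMod p) (b : B) :
    psi θ χ (step v i s) b = psi θ χ v b + θ (χ b i * s) := by
  have : psi θ χ (step v i s) b = psi θ χ (tr (Pi.single i s) v) b := by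
    unfold psi
    congr 1
    refine Finset.sum_congr rfl fun k _ => ?_
    by_cases h : k = i
    · subst h; simp [step, tr]
    · simp [step, tr, h]
  rw [this, psi_tr, act]
  simp [Pi.single_apply]

lemma ev_psi_tr (u : List (B → Λ) → ZMod p) (hu : ∀ g l, u (l.map (act θ χ g)) = u l)
    (k : ℕ) (g : I → ZMod p) (v : Vt p I) :
    ev u (mp (psi θ χ) (Y rk n k (tr g v))) = ev u (mp (psi θ χ) (Y rk n k v)) := by
  rw [Y_tr, mp_mp]
  have : psi θ χ ∘ tr g = act θ χ g ∘ psi θ χ := funext fun v => psi_tr θ χ g v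
  rw [this, ← mp_mp]
  exact ch_ext (f := ev u ∘ₗ mp (act θ χ g)) (g := ev u) (fun l => by simp [hu]) _

lemma step_fst (v : Vt p I) (i : I) (s : ZMod p) (k : I) :
    (step v i s k).1 = (v k).1 + if k = i then 1 else 0 := by
  by_cases h : k = i
  · subst h; simp [step]
  · simp [step, h]

/-- For `p = 2`, the product of the one-dimensional cocycles takes on the fundamental chain the value
of a coefficient of the product of linear forms. -/
lemma value1 (κ : Λ → Λ → ZMod p) (hκ : ∀ x y t, κ (x + t) (y + t) = κ x y) (h2 : p = 2)
    (hT : ∀ c, κ 0 (θ c) = c) (bs : List B) :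
    ∀ (v : Vt p I) (m : I → ℕ), (∀ i, (v i).1 + m i = n i) →
      ev (u1 κ bs) (mp (psi θ χ) (Y rk n bs.length v)) = W χ bs m := by
  induction bs with
  | nil => intro v m _; simp [Y, W, u1]
  | cons b bs ih =>
    intro v m hm
    have hu : ∀ g l, u1 κ bs (l.map (act θ χ g)) = u1 κ bs l := fun g l =>
      u1_map κ (fun b x => x + θ (∑ i, χ b i * g i)) (fun b x y => hκ _ _ _) bs l
    rw [List.length_cons, Y, mp_con, map_sum, map_sum, map_sum, W]
    refine Finset.sum_congr rfl fun i _ => ?_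
    have e1 : ∀ s : ZMod p, ev (u1 κ (b :: bs)) (con (psi θ χ v)
        (mp (psi θ χ) (Y rk n bs.length (step v i s))))
        = χ b i * s * ev (u1 κ bs) (mp (psi θ χ) (Y rk n bs.length (step v i 0))) := by
      intro s
      rw [← ev_psi_tr θ χ rk n (u1 κ bs) hu _ (Pi.single i s) (step v i 0), ← step_eq_tr,
        Y_eq, mp_con, u1_con, psi_step]
      congr 1
      have := hκ 0 (θ (χ b i * s)) (psi θ χ v b)
      rw [zero_add, hT, add_comm] at this
      exact this
    simp only [map_sum, map_smul, e1]
    have hlt : (v i).1 < n i ↔ 0 < m i := by have := hm i; omega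
    by_cases hi : 0 < m i
    · rw [if_pos hi, ih (step v i 0) (Function.update m i (m i - 1)) (fun k => by
        rw [step_fst, ← hm k]
        by_cases h : k = i
        · subst h; simp; omega
        · simp [h])]
      simp only [cf, hlt, hi, if_true, smul_eq_mul]
      have e2 : ∀ s, sgn rk v i * T (v i).1 s *
          (χ b i * s * W χ bs (Function.update m i (m i - 1)))
          = (T (v i).1 s * s) * (sgn rk v i * (χ b i * W χ bs (Function.update m i (m i - 1)))) :=
        fun s => by ring
      simp only [e2]
      rw [← Finset.sum_mul]
      subst h2
      have hs : sgn rk v i = 1 := by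
        unfold sgn
        rw [show (-1 : ZMod 2) = 1 from rfl, one_pow]
      have ht : ∀ j, ∑ s : ZMod 2, T j s * s = 1 := by
        intro j
        have e : ∀ f : ZMod 2 → ZMod 2, ∑ s, f s = f 0 + f 1 := fun f => Fin.sum_univ_two f
        rw [e]
        by_cases hj : Even j
        · simp [T, hj]
        · simp only [T, hj, if_false]; decide
      rw [hs, ht]; ring
    · simp [cf, hlt, hi]

/-- The product of the two-dimensional cocycles takes on the fundamental chain the value of a
coefficient of the product of linear forms. -/
lemma value2 (hrk : Function.Injective rk) (K : Λ → Λ → ZMod p) (hK : ∀ a b, K a b = K b a)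
    (hKs : ∀ c : ZMod p, ∑ s : ZMod p, (K (θ (c * s)) 0 - K (θ (c * s)) (θ (-c))) = c)
    (bs : List B) :
    ∀ (v : Vt p I) (m : I → ℕ), (∀ i, (v i).1 + 2 * m i = n i) → (∀ i, Even (v i).1) →
      ev (u2 (fun x y z => K (y - x) (z - y)) bs) (mp (psi θ χ) (Y rk n (2 * bs.length) v))
        = W χ bs m := by
  induction bs with
  | nil => intro v m _ _; simp [Y, W, u2]
  | cons b bs ih =>
    intro v m hm hev
    set κ : Λ → Λ → Λ → ZMod p := fun x y z => K (y - x) (z - y) with hκ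
    have hu : ∀ g l, u2 κ bs (l.map (act θ χ g)) = u2 κ bs l := fun g l =>
      u2_map κ (fun b x => x + θ (∑ i, χ b i * g i)) (fun b x y z => by simp [hκ]) bs l
    set k := 2 * bs.length with hk
    have e1 : ∀ i s j s', ev (u2 κ (b :: bs)) (con (psi θ χ v) (con (psi θ χ (step v i s))
        (mp (psi θ χ) (Y rk n k (step (step v i s) j s')))))
        = K (θ (χ b i * s)) (θ (χ b j * s')) *
          ev (u2 κ bs) (mp (psi θ χ) (Y rk n k (step (step v i s) j s'))) := by
      intro i s j s'
      rw [Y_eq, mp_con, u2_con, hκ]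
      simp [psi_step]
    have e2 : ev (u2 κ (b :: bs)) (mp (psi θ χ) (Y rk n (k + 2) v))
        = ∑ i, ∑ j, ∑ s, ∑ s', (cf rk n v i s * cf rk n (step v i s) j s') *
          (K (θ (χ b i * s)) (θ (χ b j * s')) *
          ev (u2 κ bs) (mp (psi θ χ) (Y rk n k (step (step v i s) j s')))) := by
      simp only [Y, mp_con, map_sum, map_smul, e1]
      refine Finset.sum_congr rfl fun i _ => ?_
      rw [Finset.sum_comm]
      refine Finset.sum_congr rfl fun s _ => ?_
      rw [Finset.smul_sum]
      refine Finset.sum_congr rfl fun j _ => ?_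
      rw [Finset.smul_sum]
      refine Finset.sum_congr rfl fun s' _ => ?_
      simp only [smul_eq_mul]; ring
    rw [List.length_cons, show 2 * (bs.length + 1) = k + 2 by omega, e2, sum_antisymm, W]
    · refine Finset.sum_congr rfl fun i _ => ?_
      have e3 : ∀ s s', ev (u2 κ bs) (mp (psi θ χ) (Y rk n k (step (step v i s) i s')))
          = ev (u2 κ bs) (mp (psi θ χ) (Y rk n k (step (step v i 0) i 0))) := by
        intro s s'
        rw [step_step_eq, step_eq_tr, ev_psi_tr θ χ rk n (u2 κ bs) hu]
      simp only [cf_step_self, e3]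
      have hlt : (v i).1 + 1 < n i ↔ 0 < m i := by have := hm i; omega
      by_cases hi : 0 < m i
      · rw [ih (step (step v i 0) i 0) (Function.update m i (m i - 1)) (fun k => by
          rw [step_fst, step_fst, ← hm k]
          by_cases h : k = i
          · subst h; simp; omega
          · simp [h]) (fun k => by
          rw [step_fst, step_fst]
          by_cases h : k = i
          · simp only [h, if_true]; exact (hev i).add (by decide : Even (1 + 1))
          · simpa [h] using hev k)]
        have h1 : ¬ Even ((v i).1 + 1) := by simpa [Nat.even_add_one] using hev i
        simp only [hlt, hi, if_true, T, hev i, h1, if_false, one_mul]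
        simp only [← mul_assoc, ← Finset.sum_mul]
        congr 1
        refine Eq.trans ?_ (hKs (χ b i))
        refine Finset.sum_congr rfl fun s _ => ?_
        simp [sub_mul, Finset.sum_sub_distrib]
      · simp [hlt, hi]
    · intro i j hij
      rw [Finset.sum_comm, ← Finset.sum_neg_distrib]
      refine Finset.sum_congr rfl fun s _ => ?_
      rw [← Finset.sum_neg_distrib]
      refine Finset.sum_congr rfl fun s' _ => ?_
      rw [cf_anti rk n hrk v hij, step_step_ne v hij, hK]
      ring

end values
end TTW

/-! ### Common zeros of equivariant functions on a product of joins -/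

namespace TTW

open Finsupp

section core
variable {p : ℕ} [NeZero p] {I : Type*} [Fintype I] [DecidableEq I]

/-- Borsuk–Ulam type criterion: equivariant functions `F b` on `X`, the label of a nonzero value
being its sign or argument, have a common zero as soon as the invariant cocycle `u` is nonzero on
the model labelling and vanishes on simplices on which some coordinate is nearly constant. -/
theorem exists_common_zero (rk n : I → ℕ) (hrk : Function.Injective rk)
    {B Λ 𝕂 : Type*} [Fintype B] [AddCommGroup Λ] [NormedField 𝕂]
    (θ : ZMod p →+ Λ) (χ : B → I → ZMod p) (ch : ZMod p → 𝕂) (hch : ∀ k, ch k ≠ 0)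
    (sg : 𝕂 → Λ) (hsg : ∀ k z, z ≠ 0 → sg (ch k * z) = sg z + θ k)
    (u : List (B → Λ) → ZMod p) (hu0 : u [] = 0)
    (hu1 : ∀ g l, u (l.map (act θ χ g)) = u l) (hu2 : ∀ l, ev u (bdl (ZMod p) l) = 0)
    {E : Type*} [NormedAddCommGroup E] [NormedSpace ℝ E]
    (hsm : ∀ (L : List E) (μ : E → B → Λ), u (L.map μ) ≠ 0 → ∀ (b : B) (z : E → 𝕂) (ε : ℝ),
      0 < ε → (∀ x ∈ L, ε ≤ ‖z x‖ ∧ μ x b = sg (z x)) →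
      (∀ x ∈ L, ∀ y ∈ L, ‖z x - z y‖ < ε) → False)
    (ρ : (I → ZMod p) → E →ₗ[ℝ] E) (vtx : Vt p I → E) (hvtx : ∀ g v, vtx (tr g v) = ρ g (vtx v))
    (X : Set E) (hXc : IsCompact X)
    (hX : ∀ l, Good n l → convexHull ℝ {x | x ∈ l.map vtx} ⊆ X)
    (lab0 : E → I → ZMod p) (hlab0 : ∀ g, ∀ x ∈ X, lab0 (ρ g x) = lab0 x + g)
    (K : ℕ) (hne : ev u (mp (psi θ χ) (Y rk n K v0)) ≠ 0)
    (F : B → E → 𝕂) (hFc : ∀ b, ContinuousOn (F b) X)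
    (hF : ∀ b g, ∀ x ∈ X, F b (ρ g x) = ch (∑ i, χ b i * g i) * F b x) :
    ∃ x ∈ X, ∀ b, F b x = 0 := by
  classical
  by_contra hcon
  push Not at hcon
  have hX0 : X.Nonempty := ⟨vtx v0, hX [v0] ⟨by simp, by simp [v0]⟩
    (subset_convexHull ℝ _ (by simp))⟩
  set G : E → B → 𝕂 := fun x b => F b x with hG
  have hGc : ContinuousOn G X := continuousOn_pi.2 hFc
  obtain ⟨ε, hε, hGε⟩ : ∃ ε > 0, ∀ x ∈ X, ε ≤ ‖G x‖ := by
    obtain ⟨x, hx, hmin⟩ := hXc.exists_isMinOn hX0 hGc.norm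
    refine ⟨‖G x‖, ?_, fun y hy => hmin hy⟩
    refine norm_pos_iff.2 fun h0 => ?_
    obtain ⟨b, hb⟩ := hcon x hx
    exact hb (congrFun h0 b)
  have huc := hXc.uniformContinuousOn_of_continuous hGc
  obtain ⟨δ, hδ, hδG⟩ := Metric.uniformContinuousOn_iff.1 huc (ε / 2) (by positivity)
  obtain ⟨D, hD⟩ := Metric.isBounded_iff.1 hXc.isBounded
  set μ : E → B → Λ := fun x b =>
    if F b x = 0 then θ (∑ i, χ b i * lab0 x i) else sg (F b x) with hμ
  obtain ⟨l, hlX, hlδ, hl⟩ := exists_small_simplex rk n hrk (act θ χ) u hu1 hu2 ρ vtx hvtx X hX D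
    (fun x hx y hy => hD hx hy) μ (fun g x hx => by
      funext b
      simp only [hμ, act, hF b g x hx, mul_eq_zero, hch, false_or]
      split_ifs with h
      · rw [hlab0 g x hx, ← map_add, ← Finset.sum_add_distrib]
        simp [mul_add]
      · exact hsg _ _ h) (psi θ χ) (psi_tr θ χ) K hne δ hδ
  obtain ⟨x0, hx0⟩ : ∃ x0, x0 ∈ l := by
    cases l with
    | nil => exact absurd hu0 hl
    | cons a l => exact ⟨a, by simp⟩
  obtain ⟨b, hb⟩ : ∃ b, ε ≤ ‖F b x0‖ := by
    by_contra h
    push Not at h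
    have h1 := hGε x0 (hlX x0 hx0)
    have h2 : ‖G x0‖ < ε := (pi_norm_lt_iff hε).2 h
    linarith
  have hdist : ∀ x ∈ l, ∀ y ∈ l, ‖F b x - F b y‖ < ε / 2 := by
    intro x hx y hy
    have h1 := hδG x (hlX x hx) y (hlX y hy) (hlδ x hx y hy)
    rw [dist_eq_norm] at h1
    exact (norm_le_pi_norm (G x - G y) b).trans_lt h1
  refine hsm l μ hl b (F b) (ε / 2) (by positivity) (fun x hx => ?_) hdist
  have h1 : ε / 2 ≤ ‖F b x‖ := by
    have := norm_sub_norm_le (F b x0) (F b x)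
    have := hdist x0 hx0 x hx
    linarith
  refine ⟨h1, ?_⟩
  have : F b x ≠ 0 := by
    intro h
    rw [h, norm_zero] at h1
    linarith
  simp [hμ, this]

end core

section space
variable (p : ℕ) [NeZero p] {Blk : Type*} [Fintype Blk] [DecidableEq Blk] (ε Nn : Blk → ℕ)

/-- Indices of the cyclic factors: block `β` carries the group `(ℤ/p)^(ε β)`. -/
abbrev Idx := Σ β : Blk, Fin (ε β)

/-- The group of block `β`. -/
abbrev Gr (β : Blk) := Fin (ε β) → ZMod p

/-- Ambient space of the configuration space: in block `β`, coordinates indexed by vertices of a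
simplex of dimension `Nn β` and elements of the group. -/
abbrev Sp := ∀ β : Blk, Fin (Nn β + 1) → Gr p ε β → ℝ

variable {p ε} in
/-- The component of a group element in block `β`. -/
def loc (g : Idx ε → ZMod p) (β : Blk) : Gr p ε β := fun j => g ⟨β, j⟩

/-- The translation action. -/
def rho (g : Idx ε → ZMod p) : Sp p ε Nn →ₗ[ℝ] Sp p ε Nn where
  toFun x := fun β k h => x β k (h - loc g β)
  map_add' _ _ := rfl
  map_smul' _ _ := rfl

/-- The product over the blocks of the joins of `Nn β + 1` copies of the group: the `β` component
is a convex combination with at most one group element for each vertex. -/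
def XX : Set (Sp p ε Nn) :=
  {x | (∀ β k h, 0 ≤ x β k h) ∧ (∀ β, ∑ k, ∑ h, x β k h = 1) ∧
    ∀ β k h h', h ≠ h' → x β k h * x β k h' = 0}

lemma XX_le_one {x : Sp p ε Nn} (hx : x ∈ XX p ε Nn) (β : Blk) (k : Fin (Nn β + 1))
    (h : Gr p ε β) : x β k h ≤ 1 := by
  rw [← hx.2.1 β]
  refine (Finset.single_le_sum (f := fun h => x β k h) (fun h _ => hx.1 β k h)
    (Finset.mem_univ h)).trans ?_
  exact Finset.single_le_sum (f := fun k => ∑ h, x β k h)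
    (fun k _ => Finset.sum_nonneg fun h _ => hx.1 β k h) (Finset.mem_univ k)

lemma XX_compact : IsCompact (XX p ε Nn) := by
  refine IsCompact.of_isClosed_subset (isCompact_Icc (a := (0 : Sp p ε Nn)) (b := 1)) ?_ ?_
  · have h1 : IsClosed {x : Sp p ε Nn | ∀ β k h, 0 ≤ x β k h} := by
      simp only [Set.ofPred_forall]
      exact isClosed_iInter fun β => isClosed_iInter fun k => isClosed_iInter fun h =>
        isClosed_le (by fun_prop) (by fun_prop)
    have h2 : IsClosed {x : Sp p ε Nn | ∀ β, ∑ k, ∑ h, x β k h = 1} := by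
      simp only [Set.ofPred_forall]
      exact isClosed_iInter fun β => isClosed_eq (by fun_prop) (by fun_prop)
    have h3 : IsClosed {x : Sp p ε Nn | ∀ β k h h', h ≠ h' → x β k h * x β k h' = 0} := by
      simp only [Set.ofPred_forall]
      exact isClosed_iInter fun β => isClosed_iInter fun k => isClosed_iInter fun h =>
        isClosed_iInter fun h' => isClosed_iInter fun _ =>
        isClosed_eq (by fun_prop) (by fun_prop)
    exact h1.inter (h2.inter h3)
  · intro x hx
    exact ⟨fun β k h => hx.1 β k h, fun β k h => XX_le_one p ε Nn hx β k h⟩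

lemma XX_rho {x : Sp p ε Nn} (hx : x ∈ XX p ε Nn) (g : Idx ε → ZMod p) :
    rho p ε Nn g x ∈ XX p ε Nn := by
  refine ⟨fun β k h => hx.1 _ _ _, fun β => ?_, fun β k h h' hh => hx.2.2 β k _ _ (by simpa using hh)⟩
  rw [← hx.2.1 β]
  refine Finset.sum_congr rfl fun k _ => ?_
  exact Fintype.sum_equiv (Equiv.subRight (loc g β)) _ _ fun h => rfl

/-- The level of a vertex in a block. -/
def lev (v : Vt p (Idx ε)) (β : Blk) : ℕ := ∑ j, (v ⟨β, j⟩).1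

/-- The realization of a vertex of the flag complex as a vertex of the product of joins. -/
def vtx (v : Vt p (Idx ε)) : Sp p ε Nn := fun β k h =>
  if (k : ℕ) = lev p ε v β ∧ h = (fun j => (v ⟨β, j⟩).2) then 1 else 0

lemma vtx_tr (g : Idx ε → ZMod p) (v : Vt p (Idx ε)) :
    vtx p ε Nn (tr g v) = rho p ε Nn g (vtx p ε Nn v) := by
  funext β k h
  have e : (h = fun j => (v ⟨β, j⟩).2 + g ⟨β, j⟩) ↔ (h - loc g β = fun j => (v ⟨β, j⟩).2) := by
    rw [sub_eq_iff_eq_add]; rfl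
  exact if_congr (and_congr Iff.rfl e) rfl rfl

/-- A flag with levels bounded by `n` spans a simplex contained in the product of joins: in each
block, vertices of the flag at the same level coincide. -/
lemma hull_subset (n : Idx ε → ℕ) (hn : ∀ β, ∑ j, n ⟨β, j⟩ ≤ Nn β) (l : List (Vt p (Idx ε)))
    (hl : Good n l) : convexHull ℝ {x | x ∈ l.map (vtx p ε Nn)} ⊆ XX p ε Nn := by
  set S : Set (Sp p ε Nn) := {x | (∀ β k h, 0 ≤ x β k h) ∧ (∀ β, ∑ k, ∑ h, x β k h = 1) ∧
    ∀ β k h, x β k h ≠ 0 → ∃ v ∈ l, vtx p ε Nn v β k h ≠ 0} with hS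
  have hconv : Convex ℝ S := by
    intro x hx y hy a b ha hb hab
    refine ⟨fun β k h => ?_, fun β => ?_, fun β k h hne => ?_⟩
    · have := hx.1 β k h
      have := hy.1 β k h
      simp only [Pi.add_apply, Pi.smul_apply, smul_eq_mul]
      positivity
    · simp only [Pi.add_apply, Pi.smul_apply, smul_eq_mul, Finset.sum_add_distrib,
        ← Finset.mul_sum, hx.2.1, hy.2.1]
      linarith
    · by_cases h1 : x β k h = 0
      · by_cases h2 : y β k h = 0
        · exact absurd (by simp [h1, h2]) hne
        · exact hy.2.2 β k h h2
      · exact hx.2.2 β k h h1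
  have hsub : {x | x ∈ l.map (vtx p ε Nn)} ⊆ S := by
    intro x hx
    obtain ⟨v, hv, rfl⟩ := List.mem_map.1 hx
    refine ⟨fun β k h => ?_, fun β => ?_, fun β k h hne => ⟨v, hv, hne⟩⟩
    · unfold vtx; split_ifs <;> norm_num
    · have hlev : lev p ε v β < Nn β + 1 := by
        have := Finset.sum_le_sum (s := Finset.univ) (fun j _ => hl.2 v hv ⟨β, j⟩)
        have := hn β
        unfold lev
        omega
      rw [Finset.sum_eq_single ⟨lev p ε v β, hlev⟩, Finset.sum_eq_single (fun j => (v ⟨β, j⟩).2)]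
      · simp [vtx]
      · intro h _ hh; simp [vtx, hh]
      · simp
      · intro k _ hk
        have : (k : ℕ) ≠ lev p ε v β := fun h => hk (Fin.ext h)
        simp [vtx, this]
      · simp
  refine (convexHull_min hsub hconv).trans fun x hx => ⟨hx.1, hx.2.1, fun β k h h' hh => ?_⟩
  by_contra hne
  obtain ⟨v, hv, h1⟩ := hx.2.2 β k h (left_ne_zero_of_mul hne)
  obtain ⟨v', hv', h2⟩ := hx.2.2 β k h' (right_ne_zero_of_mul hne)
  have key : ∀ v v' : Vt p (Idx ε), Rel v v' → lev p ε v β = lev p ε v' β →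
      ∀ j, v ⟨β, j⟩ = v' ⟨β, j⟩ := by
    intro v v' hr hlev j
    rcases hr ⟨β, j⟩ with hlt | heq
    · exfalso
      have : lev p ε v β < lev p ε v' β :=
        Finset.sum_lt_sum (fun j _ => by
          rcases hr ⟨β, j⟩ with h | h
          · exact h.le
          · rw [h]) ⟨j, Finset.mem_univ j, hlt⟩
      omega
    · exact heq
  simp only [vtx, ne_eq, ite_eq_right_iff, one_ne_zero, imp_false, not_not] at h1 h2
  have hcmp : v = v' ∨ Rel v v' ∨ Rel v' v := by
    by_cases e : v = v'
    · exact Or.inl e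
    · right
      have hp : l.Pairwise (fun a b => Rel a b ∨ Rel b a) := hl.1.imp (fun h => Or.inl h)
      have : Std.Symm (fun a b : Vt p (Idx ε) => Rel a b ∨ Rel b a) := ⟨fun _ _ h => h.symm⟩
      exact hp.forall hv hv' e
  have heq : ∀ j, v ⟨β, j⟩ = v' ⟨β, j⟩ := by
    rcases hcmp with rfl | h | h
    · exact fun _ => rfl
    · exact key v v' h (by omega)
    · exact fun j => (key v' v h (by omega) j).symm
  apply hh
  rw [h1.2, h2.2]
  funext j
  rw [heq j]

/-- An equivariant map from the product of joins to the group: in each block, a vertex is chosen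
depending only on the set of vertices in use, and its group element is read off. -/
lemma exists_lab0 : ∃ lab0 : Sp p ε Nn → Idx ε → ZMod p,
    ∀ g, ∀ x ∈ XX p ε Nn, lab0 (rho p ε Nn g x) = lab0 x + g := by
  classical
  let S : Sp p ε Nn → ∀ β, Set (Fin (Nn β + 1)) := fun x β => {k | ∃ h, x β k h ≠ 0}
  have hS : ∀ g x, S (rho p ε Nn g x) = S x := by
    intro g x
    funext β
    ext k
    constructor
    · rintro ⟨h, hh⟩; exact ⟨_, hh⟩
    · rintro ⟨h, hh⟩
      exact ⟨h + loc g β, by simpa [rho] using hh⟩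
  have hne : ∀ x ∈ XX p ε Nn, ∀ β, (S x β).Nonempty := by
    intro x hx β
    by_contra h
    have h0 : ∀ k h, x β k h = 0 := by
      intro k h'
      by_contra hk
      exact h ⟨k, h', hk⟩
    have := hx.2.1 β
    simp [h0] at this
  let kk : ∀ β, Set (Fin (Nn β + 1)) → Fin (Nn β + 1) := fun β A => Classical.epsilon (· ∈ A)
  let hh : ∀ (x : Sp p ε Nn) (β : Blk), Gr p ε β := fun x β =>
    Classical.epsilon fun h => x β (kk β (S x β)) h ≠ 0
  have hhs : ∀ x ∈ XX p ε Nn, ∀ β, x β (kk β (S x β)) (hh x β) ≠ 0 := fun x hx β =>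
    Classical.epsilon_spec (p := fun h => x β (kk β (S x β)) h ≠ 0)
      (Classical.epsilon_spec (p := (· ∈ S x β)) (hne x hx β))
  refine ⟨fun x i => hh x i.1 i.2, fun g x hx => ?_⟩
  have h3 : ∀ β, hh (rho p ε Nn g x) β = hh x β + loc g β := by
    intro β
    have h1 := hhs x hx β
    have h2 := hhs _ (XX_rho p ε Nn hx g) β
    rw [hS] at h2
    by_contra hcon
    exact mul_ne_zero h2 h1 (hx.2.2 β _ _ _ (fun h => hcon (sub_eq_iff_eq_add.1 h)))
  funext ⟨β, j⟩
  exact congrFun (h3 β) j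

end space
end TTW

/-! ### The Borsuk–Ulam theorem for products of joins -/

namespace TTW

/-- The Borsuk–Ulam property for the character `e` of `ℤ/p` with values in `𝕂`: a family of
equivariant functions on a product of joins has a common zero, provided the weights `χ` are
triangular with respect to the leading indices `lead` and every block has enough vertices for the
functions whose leading index lies in it (`q` vertices for each, `q` being the real dimension
of `𝕂`). -/
def BU (p : ℕ) [NeZero p] (𝕂 : Type) [NormedField 𝕂] (q : ℕ) (e : AddChar (ZMod p) 𝕂) : Prop :=
  ∀ (Blk : Type) [Fintype Blk] [DecidableEq Blk] (ε Nn : Blk → ℕ) (B : Type) [Fintype B]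
    (χ : B → Idx ε → ZMod p) (lead : B → Idx ε) (wt : Idx ε → ℕ),
    (∀ b, χ b (lead b) ≠ 0) →
    (∀ b i, i ≠ lead b → χ b i ≠ 0 → wt (lead b) < wt i) →
    (∀ β, q * (Finset.univ.filter fun b => (lead b).1 = β).card ≤ Nn β) →
    ∀ F : B → Sp p ε Nn → 𝕂, (∀ b, ContinuousOn (F b) (XX p ε Nn)) →
    (∀ b g, ∀ x ∈ XX p ε Nn, F b (rho p ε Nn g x) = e (∑ i, χ b i * g i) * F b x) →
    ∃ x ∈ XX p ε Nn, ∀ b, F b x = 0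

lemma count_lead {Blk : Type} [Fintype Blk] [DecidableEq Blk] (ε : Blk → ℕ) {B : Type} [Fintype B]
    (lead : B → Idx ε) (β : Blk) :
    ∑ j, ((Finset.univ.toList : List B).map lead).count ⟨β, j⟩
      = (Finset.univ.filter fun b => (lead b).1 = β).card := by
  classical
  have h1 : ∀ i, ((Finset.univ.toList : List B).map lead).count i
      = (Finset.univ.filter fun b => lead b = i).card := by
    intro i
    rw [← Multiset.coe_count, ← Multiset.map_coe, Finset.coe_toList, Multiset.count_map]
    simp only [eq_comm (a := i)]
    rfl
  simp only [h1]
  rw [Finset.card_eq_sum_card_fiberwise (f := lead)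
    (t := Finset.univ.image fun j => (⟨β, j⟩ : Idx ε)), Finset.sum_image]
  · refine Finset.sum_congr rfl fun j _ => ?_
    congr 1
    ext b
    simp only [Finset.mem_filter, Finset.mem_univ, true_and]
    exact ⟨fun h => ⟨by rw [h], h⟩, fun h => h.2⟩
  · intro j _ j' _ h
    simpa using h
  · intro b hb
    simp only [Finset.coe_filter, Finset.mem_univ, true_and, Set.mem_ofPred_eq] at hb
    simp only [Finset.coe_image, Finset.coe_univ, Set.image_univ, Set.mem_range]
    generalize lead b = i at hb
    obtain ⟨γ, j⟩ := i
    subst hb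
    exact ⟨j, rfl⟩

lemma exists_rk (I : Type*) [Fintype I] : ∃ rk : I → ℕ, Function.Injective rk :=
  ⟨fun i => (Fintype.equivFin I i : ℕ), fun _ _ h =>
    (Fintype.equivFin I).injective (Fin.ext h)⟩

/-- The sign character of `ℤ/2`. -/
def eTwo : AddChar (ZMod 2) ℝ := AddChar.zmodChar 2 (ζ := (-1 : ℝ)) (by norm_num)

lemma eTwo_zero : eTwo 0 = 1 := AddChar.map_zero_eq_one _
lemma eTwo_one : eTwo 1 = -1 := by
  simp [eTwo, AddChar.zmodChar_apply, ZMod.val_one]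

/-- The label of a nonzero real number is its sign; the cocycle is the difference of labels. -/
theorem bu_two : BU 2 ℝ 1 eTwo := by
  intro Blk _ _ ε Nn B _ χ lead wt hl hlead hN F hFc hF
  classical
  obtain ⟨rk, hrk⟩ := exists_rk (Idx ε)
  obtain ⟨lab0, hlab0⟩ := exists_lab0 2 ε Nn
  have : Fact (Nat.Prime 2) := ⟨Nat.prime_two⟩
  set bs : List B := Finset.univ.toList with hbs
  set κ : ZMod 2 → ZMod 2 → ZMod 2 := fun x y => y - x with hκ
  set n : Idx ε → ℕ := fun i => (bs.map lead).count i with hn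
  refine exists_common_zero (Λ := ZMod 2) rk n hrk (AddMonoidHom.id _) χ eTwo ?_
    (fun z => if z < 0 then 1 else 0) ?_ (u1 κ bs) ?_ ?_ ?_ ?_ (rho 2 ε Nn) (vtx 2 ε Nn)
    (vtx_tr 2 ε Nn) (XX 2 ε Nn) (XX_compact 2 ε Nn) (hull_subset 2 ε Nn n ?_) lab0 hlab0
    bs.length ?_ F hFc hF
  · intro k
    fin_cases k
    · change eTwo 0 ≠ 0; rw [eTwo_zero]; norm_num
    · change eTwo 1 ≠ 0; rw [eTwo_one]; norm_num
  · intro k z hz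
    fin_cases k
    · change (if eTwo 0 * z < 0 then (1 : ZMod 2) else 0) = (if z < 0 then 1 else 0) + 0
      rw [eTwo_zero]; simp
    · change (if eTwo 1 * z < 0 then (1 : ZMod 2) else 0) = (if z < 0 then 1 else 0) + 1
      rw [eTwo_one]
      rcases lt_or_gt_of_ne hz with h | h
      · have : ¬ (-1 * z < 0) := by linarith
        rw [if_neg this, if_pos h]; rfl
      · have : (-1 * z < 0) := by linarith
        rw [if_pos this, if_neg (by linarith)]; rfl
  · cases bs <;> rfl
  · intro g l
    exact u1_map κ (fun b x => x + ∑ i, χ b i * g i) (fun b x y => by simp [hκ]) bs l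
  · exact u1_cocycle κ (fun x y z => by simp only [hκ]; ring) bs
  · intro L μ hu b z ε' hε h1 h2
    obtain ⟨x', hx', y', hy', hne⟩ := u1_ne_zero κ bs _ hu b (by simp [hbs])
    obtain ⟨x, hx, rfl⟩ := List.mem_map.1 hx'
    obtain ⟨y, hy, rfl⟩ := List.mem_map.1 hy'
    apply hne
    simp only [hκ, (h1 x hx).2, (h1 y hy).2]
    have a1 := (h1 x hx).1
    have a2 := (h1 y hy).1
    have a3 := h2 x hx y hy
    simp only [Real.norm_eq_abs] at a1 a2 a3
    have : (z y < 0) ↔ (z x < 0) := by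
      constructor
      · intro h
        by_contra h'
        rw [abs_of_neg h] at a2
        have := (abs_lt.1 a3).2
        linarith
      · intro h
        by_contra h'
        rw [abs_of_neg h] at a1
        have := (abs_lt.1 a3).1
        linarith
    simp [this]
  · intro β
    have := hN β
    rw [one_mul, ← count_lead] at this
    exact this
  · rw [value1 (AddMonoidHom.id _) χ rk n κ (fun x y t => by simp [hκ]) rfl (fun c => by simp [hκ])
      bs v0 n (fun i => by simp [v0]), W_eq_prod χ lead wt hlead bs n (fun i => rfl)]
    refine List.prod_ne_zero ?_
    simp only [List.mem_map, not_exists, not_and]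
    exact fun b _ => hl b

section odd
variable (p : ℕ) [NeZero p]

lemma std_norm {p : ℕ} [NeZero p] (k : ZMod p) : ‖(ZMod.stdAddChar k : ℂ)‖ = 1 :=
  Circle.norm_coe (ZMod.toCircle k)

lemma std_ne_zero {p : ℕ} [NeZero p] (k : ZMod p) : (ZMod.stdAddChar k : ℂ) ≠ 0 :=
  norm_ne_zero_iff.1 (by rw [std_norm]; exact one_ne_zero)

/-- The argument of the standard character. -/
def thArg : ZMod p →+ Real.Angle :=
  AddMonoidHom.mk' (fun k => ((ZMod.stdAddChar k : ℂ).arg : Real.Angle)) fun a b => by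
    rw [AddChar.map_add_eq_mul, Complex.arg_mul_coe_angle (std_ne_zero _)
      (std_ne_zero _)]

lemma exists_carry (a b : Real.Angle) :
    ∃ k : ℤ, a.toReal + b.toReal - (a + b).toReal = 2 * Real.pi * k := by
  refine Real.Angle.angle_eq_iff_two_pi_dvd_sub.1 ?_
  simp

/-- The carry in the addition of two angles represented in `(-π, π]`, in units of `2π`. -/
def carry (a b : Real.Angle) : ℤ := (exists_carry a b).choose

lemma carry_spec (a b : Real.Angle) :
    a.toReal + b.toReal - (a + b).toReal = 2 * Real.pi * carry a b := (exists_carry a b).choose_spec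

lemma carry_eq {a b : Real.Angle} {k : ℤ}
    (h : a.toReal + b.toReal - (a + b).toReal = 2 * Real.pi * k) : carry a b = k := by
  rw [carry_spec] at h
  have := mul_left_cancel₀ (by positivity) h
  exact_mod_cast this

lemma carry_small {a b : Real.Angle} (ha : |a.toReal| < Real.pi / 2) (hb : |b.toReal| < Real.pi / 2)
    (hc : |(a + b).toReal| < Real.pi / 2) : carry a b = 0 := by
  have h := carry_spec a b
  have hpi := Real.pi_pos
  rw [abs_lt] at ha hb hc
  have h1 : (carry a b : ℝ) < 1 := by
    by_contra hh
    push Not at hh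
    nlinarith
  have h2 : (-1 : ℝ) < carry a b := by
    by_contra hh
    push Not at hh
    nlinarith
  have h1' : carry a b < 1 := by exact_mod_cast h1
  have h2' : -1 < carry a b := by exact_mod_cast h2
  omega

lemma thArg_toReal (k : ZMod p) :
    ∃ t : ℤ, p * (thArg p k).toReal = 2 * Real.pi * t ∧ (t : ZMod p) = k := by
  have hp : (p : ℝ) ≠ 0 := by exact_mod_cast NeZero.ne p
  have hpc : (p : ℂ) ≠ 0 := by exact_mod_cast NeZero.ne p
  have hpi : (Real.pi : ℂ) ≠ 0 := by exact_mod_cast Real.pi_ne_zero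
  have h1 : (thArg p k).toReal = (ZMod.stdAddChar k : ℂ).arg := Complex.arg_coe_angle_toReal_eq_arg _
  have h2 : (ZMod.stdAddChar k : ℂ) = Complex.exp (2 * Real.pi * Complex.I * (k.val : ℤ) / p) := by
    rw [← ZMod.stdAddChar_coe]
    simp
  have hn : ‖(ZMod.stdAddChar k : ℂ)‖ = 1 := std_norm k
  have h3 := Complex.norm_mul_exp_arg_mul_I (ZMod.stdAddChar k : ℂ)
  rw [hn, Complex.ofReal_one, one_mul] at h3
  rw [← h1] at h3
  rw [h2] at h3
  obtain ⟨m, hm⟩ := Complex.exp_eq_exp_iff_exists_int.1 h3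
  refine ⟨k.val + p * m, ?_, by simp⟩
  have h4 : ((p * (thArg p k).toReal : ℝ) : ℂ) = ((2 * Real.pi * (k.val + p * m) : ℝ) : ℂ) := by
    apply mul_right_cancel₀ Complex.I_ne_zero
    push_cast
    rw [mul_assoc, hm]
    field_simp
    push_cast
    ring
  have := Complex.ofReal_injective h4
  rw [this]
  push_cast
  ring

/-- The carry cocycle represents the generator: summed over an orbit the real representatives of the
angles telescope, leaving `p` times one angle in units of `2π`. -/
lemma carry_sum (c : ZMod p) :
    ∑ s : ZMod p, ((carry (thArg p (c * s)) 0 : ZMod p)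
      - (carry (thArg p (c * s)) (thArg p (-c)) : ZMod p)) = c := by
  have h0 : ∀ a, carry a 0 = 0 := fun a => carry_eq (by simp)
  obtain ⟨t, ht, htc⟩ := thArg_toReal p (-c)
  have hR : (∑ s : ZMod p, (carry (thArg p (c * s)) (thArg p (-c)) : ℝ)) = t := by
    apply mul_left_cancel₀ (show 2 * Real.pi ≠ 0 by positivity)
    rw [Finset.mul_sum, ← ht]
    simp only [← carry_spec, ← map_add]
    rw [Finset.sum_sub_distrib, Finset.sum_add_distrib]
    have : ∑ s : ZMod p, (thArg p (c * s + -c)).toReal = ∑ s : ZMod p, (thArg p (c * s)).toReal :=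
      Fintype.sum_equiv (Equiv.subRight 1) _ _ fun s => by
        congr 2
        change c * s + -c = c * (s - 1)
        ring
    rw [this]
    simp [ZMod.card]
  have hZ : (∑ s : ZMod p, carry (thArg p (c * s)) (thArg p (-c))) = t := by exact_mod_cast hR
  simp only [h0, Int.cast_zero, zero_sub, Finset.sum_neg_distrib]
  rw [← Int.cast_sum, hZ, htc, neg_neg]

/-- The carry vanishes on three complex numbers close to each other relative to their size. -/
lemma carry_arg {x y w : ℂ} {ε : ℝ} (hε : 0 < ε) (hx : ε ≤ ‖x‖) (hy : ε ≤ ‖y‖) (hw : ε ≤ ‖w‖)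
    (hxy : ‖x - y‖ < ε) (hyw : ‖y - w‖ < ε) (hxw : ‖x - w‖ < ε) :
    carry ((y.arg : Real.Angle) - x.arg) ((w.arg : Real.Angle) - y.arg) = 0 := by
  have key : ∀ x y : ℂ, ε ≤ ‖x‖ → ε ≤ ‖y‖ → ‖x - y‖ < ε →
      |((y.arg : Real.Angle) - x.arg).toReal| < Real.pi / 2 := by
    intro x y hx hy hxy
    have hx0 : x ≠ 0 := norm_pos_iff.1 (by linarith)
    have hy0 : y ≠ 0 := norm_pos_iff.1 (by linarith)
    rw [← Complex.arg_div_coe_angle hy0 hx0, Complex.arg_coe_angle_toReal_eq_arg,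
      Complex.abs_arg_lt_pi_div_two_iff]
    left
    have h1 : ‖1 - y / x‖ < 1 := by
      have : 1 - y / x = (x - y) / x := by field_simp
      rw [this, norm_div, div_lt_one (by linarith)]
      linarith
    have h2 := (Complex.re_le_norm (1 - y / x)).trans_lt h1
    simp only [Complex.sub_re, Complex.one_re] at h2
    linarith
  refine carry_small (key x y hx hy hxy) (key y w hy hw hyw) ?_
  rw [show ((y.arg : Real.Angle) - x.arg) + ((w.arg : Real.Angle) - y.arg)
    = (w.arg : Real.Angle) - x.arg by abel]
  exact key x w hx hw hxw

/-- The label of a nonzero complex number is its argument; the cocycle is the carry in the addition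
of differences of arguments. -/
theorem bu_odd (hp : p.Prime) : BU p ℂ 2 ZMod.stdAddChar := by
  intro Blk _ _ ε Nn B _ χ lead wt hl hlead hN F hFc hF
  classical
  obtain ⟨rk, hrk⟩ := exists_rk (Idx ε)
  obtain ⟨lab0, hlab0⟩ := exists_lab0 p ε Nn
  have : Fact p.Prime := ⟨hp⟩
  set bs : List B := Finset.univ.toList with hbs
  set K : Real.Angle → Real.Angle → ZMod p := fun a b => (carry a b : ZMod p) with hK
  set κ : Real.Angle → Real.Angle → Real.Angle → ZMod p :=
    fun x y z => K (y - x) (z - y) with hκ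
  set m : Idx ε → ℕ := fun i => (bs.map lead).count i with hm
  set n : Idx ε → ℕ := fun i => 2 * m i with hn
  refine exists_common_zero (Λ := Real.Angle) rk n hrk (thArg p) χ ZMod.stdAddChar
    (fun k => std_ne_zero _)
    (fun z => (z.arg : Real.Angle)) ?_ (u2 κ bs) ?_ ?_ ?_ ?_ (rho p ε Nn) (vtx p ε Nn)
    (vtx_tr p ε Nn) (XX p ε Nn) (XX_compact p ε Nn) (hull_subset p ε Nn n ?_) lab0 hlab0
    (2 * bs.length) ?_ F hFc hF
  · intro k z hz
    rw [Complex.arg_mul_coe_angle (std_ne_zero _) hz, add_comm]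
    rfl
  · cases bs <;> rfl
  · intro g l
    exact u2_map κ (fun b x => x + thArg p (∑ i, χ b i * g i)) (fun b x y z => by simp [hκ]) bs l
  · refine u2_cocycle κ (fun x y z t => ?_) bs
    simp only [hκ, hK]
    rw [← Int.cast_sub, ← Int.cast_add, ← Int.cast_sub]
    have : carry (z - y) (t - z) - carry (z - x) (t - z) + carry (y - x) (t - y)
        - carry (y - x) (z - y) = 0 := by
      have h1 := carry_spec (z - y) (t - z)
      have h2 := carry_spec (z - x) (t - z)
      have h3 := carry_spec (y - x) (t - y)
      have h4 := carry_spec (y - x) (z - y)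
      rw [show z - y + (t - z) = t - y by abel] at h1
      rw [show z - x + (t - z) = t - x by abel] at h2
      rw [show y - x + (t - y) = t - x by abel] at h3
      rw [show y - x + (z - y) = z - x by abel] at h4
      have h5 : (2 * Real.pi) * ((carry (z - y) (t - z) - carry (z - x) (t - z)
          + carry (y - x) (t - y) - carry (y - x) (z - y) : ℤ) : ℝ) = 0 := by
        push_cast
        linear_combination h2 + h4 - h1 - h3
      have h6 := (mul_eq_zero.1 h5).resolve_left (by positivity)
      exact_mod_cast h6
    rw [this, Int.cast_zero]
  · intro L μ hu b z ε' hε h1 h2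
    obtain ⟨x', hx', y', hy', w', hw', hne⟩ := u2_ne_zero κ bs _ hu b (by simp [hbs])
    obtain ⟨x, hx, rfl⟩ := List.mem_map.1 hx'
    obtain ⟨y, hy, rfl⟩ := List.mem_map.1 hy'
    obtain ⟨w, hw, rfl⟩ := List.mem_map.1 hw'
    apply hne
    simp only [hκ, hK, (h1 x hx).2, (h1 y hy).2, (h1 w hw).2]
    rw [carry_arg hε (h1 x hx).1 (h1 y hy).1 (h1 w hw).1 (h2 x hx y hy) (h2 y hy w hw)
      (h2 x hx w hw), Int.cast_zero]
  · intro β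
    have := hN β
    rw [← count_lead] at this
    rw [← Finset.mul_sum]
    exact this
  · rw [value2 (thArg p) χ rk n hrk K (fun a b => ?_) (carry_sum p)
      bs v0 m (fun i => by simp [v0, hn]) (fun i => by simp [v0]),
      W_eq_prod χ lead wt hlead bs m (fun i => rfl)]
    · refine List.prod_ne_zero ?_
      simp only [List.mem_map, not_exists, not_and]
      exact fun b _ => hl b
    · simp only [hK]
      congr 1
      refine carry_eq ?_
      rw [← carry_spec, add_comm a b]
      ring

end odd
end TTW

/-! ### Homogeneous extension, Fourier inversion, colour counts -/

namespace TTW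

section cone
variable {N d : ℕ}

/-- The positively homogeneous extension of a map on the simplex to the nonnegative orthant
(the origin is sent to `0`). -/
def hom (f : EuclideanSpace ℝ (Fin (N + 1)) → EuclideanSpace ℝ (Fin d)) (y : Fin (N + 1) → ℝ) :
    EuclideanSpace ℝ (Fin d) :=
  (∑ k, y k) • f (WithLp.toLp 2 ((∑ k, y k)⁻¹ • y))

lemma normalize_mem {y : Fin (N + 1) → ℝ} (hy : ∀ k, 0 ≤ y k) (h0 : 0 < ∑ k, y k) :
    WithLp.toLp 2 ((∑ k, y k)⁻¹ • y) ∈ stdSimp N := by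
  refine ⟨fun i => ?_, ?_⟩
  · have := hy i
    simp only [Pi.smul_apply, smul_eq_mul]
    positivity
  · simp only [Pi.smul_apply, smul_eq_mul, ← Finset.mul_sum]
    exact inv_mul_cancel₀ h0.ne'

lemma stdSimp_compact : IsCompact (stdSimp N) := by
  have h := (isCompact_stdSimplex ℝ (Fin (N + 1))).image
    (PiLp.continuous_toLp 2 (fun _ : Fin (N + 1) => ℝ))
  convert h using 1
  ext x
  constructor
  · intro hx
    exact ⟨WithLp.ofLp x, hx, rfl⟩
  · rintro ⟨y, hy, rfl⟩
    exact hy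

lemma hom_continuousOn {f : EuclideanSpace ℝ (Fin (N + 1)) → EuclideanSpace ℝ (Fin d)}
    (hf : ContinuousOn f (stdSimp N)) :
    ContinuousOn (hom f) {y : Fin (N + 1) → ℝ | ∀ k, 0 ≤ y k} := by
  obtain ⟨M, hM⟩ := (stdSimp_compact.image_of_continuousOn hf).isBounded.exists_norm_le
  have hM' : ∀ x ∈ stdSimp N, ‖f x‖ ≤ M := fun x hx => hM _ ⟨x, hx, rfl⟩
  have hs : Continuous fun y : Fin (N + 1) → ℝ => ∑ k, y k := by fun_prop
  intro y hy
  have hnn : ∀ z : Fin (N + 1) → ℝ, (∀ k, 0 ≤ z k) → 0 ≤ ∑ k, z k :=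
    fun z hz => Finset.sum_nonneg fun k _ => hz k
  rcases (hnn y hy).eq_or_lt with h0 | h0
  · -- at the origin the map is squeezed by `M * ∑ y k`
    have hy0 : hom f y = 0 := by simp [hom, ← h0]
    unfold ContinuousWithinAt
    rw [hy0]
    refine squeeze_zero_norm' (a := fun z : Fin (N + 1) → ℝ => (∑ k, z k) * M) ?_ ?_
    · filter_upwards [self_mem_nhdsWithin] with z hz
      rcases (hnn z hz).eq_or_lt with h1 | h1
      · simp [hom, ← h1]
      · rw [hom, norm_smul, Real.norm_of_nonneg h1.le]
        exact mul_le_mul_of_nonneg_left (hM' _ (normalize_mem hz h1)) h1.le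
    · have : Filter.Tendsto (fun z : Fin (N + 1) → ℝ => (∑ k, z k) * M)
          (nhdsWithin y {y : Fin (N + 1) → ℝ | ∀ k, 0 ≤ y k}) (nhds ((∑ k, y k) * M)) :=
        ((hs.mul continuous_const).tendsto y).mono_left nhdsWithin_le_nhds
      rwa [← h0, zero_mul] at this
  · have h1 : ContinuousWithinAt (fun z : Fin (N + 1) → ℝ =>
        f (WithLp.toLp 2 ((∑ k, z k)⁻¹ • z))) {y : Fin (N + 1) → ℝ | ∀ k, 0 ≤ y k} y := by
      have hg : ContinuousAt (fun z : Fin (N + 1) → ℝ =>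
          (WithLp.toLp 2 ((∑ k, z k)⁻¹ • z) : EuclideanSpace ℝ (Fin (N + 1)))) y :=
        (PiLp.continuous_toLp 2 (fun _ : Fin (N + 1) => ℝ)).continuousAt.comp
          ((hs.continuousAt.inv₀ h0.ne').smul continuousAt_id)
      refine Filter.Tendsto.comp (hf _ (normalize_mem hy h0))
        (tendsto_nhdsWithin_iff.2 ⟨hg.continuousWithinAt, ?_⟩)
      have hpos : ∀ᶠ z in nhdsWithin y {y : Fin (N + 1) → ℝ | ∀ k, 0 ≤ y k}, 0 < ∑ k, z k :=
        (hs.continuousAt.continuousWithinAt).eventually (lt_mem_nhds h0)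
      filter_upwards [self_mem_nhdsWithin, hpos] with z hz hz'
      exact normalize_mem hz hz'
    exact hs.continuousWithinAt.smul h1

end cone

section fourier
variable {p : ℕ} [Fact p.Prime] {𝕂 : Type} [RCLike 𝕂] (e : AddChar (ZMod p) 𝕂)

/-- The Fourier coefficient of `y` at `χ`. -/
def four {n : ℕ} (χ : Fin n → ZMod p) (y : (Fin n → ZMod p) → 𝕂) : 𝕂 :=
  ∑ g, e (∑ j, χ j * g j) * y g

variable {e}

lemma four_shift {n : ℕ} (χ : Fin n → ZMod p) (y : (Fin n → ZMod p) → 𝕂) (g0 : Fin n → ZMod p) :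
    four e χ (fun g => y (g - g0)) = e (∑ j, χ j * g0 j) * four e χ y := by
  unfold four
  rw [Finset.mul_sum]
  refine Fintype.sum_equiv (Equiv.subRight g0) _ _ fun g => ?_
  simp only [Equiv.subRight_apply, ← mul_assoc, ← AddChar.map_add_eq_mul,
    ← Finset.sum_add_distrib, ← mul_add, Pi.sub_apply, add_sub_cancel]

lemma four_neg {n : ℕ} (χ : Fin n → ZMod p) (y : (Fin n → ZMod p) → 𝕂) :
    four e (-χ) y = (starRingEnd 𝕂) (four e χ (fun g => (starRingEnd 𝕂) (y g))) := by
  simp only [four, map_sum, map_mul, RCLike.conj_conj]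
  refine Finset.sum_congr rfl fun g _ => ?_
  rw [← AddChar.map_neg_eq_conj]
  simp

lemma sum_char {n : ℕ} (he : e ≠ 1) (v : Fin n → ZMod p) (hv : v ≠ 0) :
    ∑ χ : Fin n → ZMod p, e (∑ j, χ j * v j) = 0 := by
  let φ : (Fin n → ZMod p) →+ ZMod p :=
    AddMonoidHom.mk' (fun χ => ∑ j, χ j * v j) fun a b => by
      simp [add_mul, Finset.sum_add_distrib]
  refine AddChar.sum_eq_zero_of_ne_one (ψ := e.compAddMonoidHom φ) fun h => he ?_
  obtain ⟨j, hj⟩ := Function.ne_iff.1 hv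
  ext k
  have := DFunLike.congr_fun h (Pi.single j (k * (v j)⁻¹))
  simp only [AddChar.compAddMonoidHom_apply, φ, AddMonoidHom.mk'_apply, AddChar.one_apply] at this
  rw [Finset.sum_eq_single j (fun i _ hi => by simp [hi]) (by simp), Pi.single_eq_same,
    inv_mul_cancel_right₀ hj] at this
  rw [this, AddChar.one_apply]

/-- A function all of whose Fourier coefficients outside `0` vanish is constant. -/
lemma four_const {n : ℕ} (he : e ≠ 1) (y : (Fin n → ZMod p) → 𝕂)
    (h : ∀ χ, χ ≠ 0 → four e χ y = 0) (g0 : Fin n → ZMod p) :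
    (p ^ n : ℕ) * y g0 = ∑ g, y g := by
  classical
  have h1 : ∑ χ : Fin n → ZMod p, four e χ (fun g => y (g + g0)) = ∑ g, y g := by
    rw [Finset.sum_eq_single 0]
    · simp only [four, Pi.zero_apply, zero_mul, Finset.sum_const_zero, AddChar.map_zero_eq_one,
        one_mul]
      exact Fintype.sum_equiv (Equiv.addRight g0) _ _ fun g => rfl
    · intro χ _ hχ
      have := four_shift (e := e) χ y (-g0)
      rw [h χ hχ, mul_zero] at this
      simpa using this
    · simp
  rw [← h1]
  simp only [four]
  rw [Finset.sum_comm, Finset.sum_eq_single 0]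
  · simp [ZMod.card]
  · intro g _ hg
    rw [← Finset.sum_mul, sum_char he g hg, zero_mul]
  · simp

end fourier

section half
variable {p : ℕ} [Fact p.Prime]

/-- Representatives of the nonzero characters up to sign. -/
lemma exists_half (hp : p ≠ 2) (n : ℕ) : ∃ H : Finset (Fin n → ZMod p), 2 * H.card ≤ p ^ n - 1 ∧
    (∀ χ ∈ H, χ ≠ 0) ∧ ∀ χ, χ ≠ 0 → χ ∈ H ∨ -χ ∈ H := by
  classical
  let rk := Fintype.equivFin (Fin n → ZMod p)
  let H := Finset.univ.filter fun χ : Fin n → ZMod p => rk χ < rk (-χ)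
  have hneg : ∀ χ : Fin n → ZMod p, χ ≠ 0 → χ ≠ -χ := by
    intro χ hχ h
    apply hχ
    funext j
    have h2 : χ j = -χ j := congrFun h j
    have h3 : (2 : ZMod p) * χ j = 0 := by linear_combination h2
    refine (mul_eq_zero.1 h3).resolve_left ?_
    intro h4
    have : ((2 : ℕ) : ZMod p) = 0 := by exact_mod_cast h4
    rw [ZMod.natCast_eq_zero_iff] at this
    exact hp ((Nat.prime_dvd_prime_iff_eq Fact.out Nat.prime_two).1 this)
  refine ⟨H, ?_, ?_, ?_⟩
  · have hd : Disjoint H (H.image Neg.neg) := by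
      rw [Finset.disjoint_left]
      intro χ h1 h2
      obtain ⟨ψ, h3, rfl⟩ := Finset.mem_image.1 h2
      simp only [H, Finset.mem_filter, Finset.mem_univ, true_and, neg_neg] at h1 h3
      exact lt_asymm h1 h3
    have h0 : H ∪ H.image Neg.neg ⊆ Finset.univ.erase 0 := by
      intro χ h
      rw [Finset.mem_erase]
      refine ⟨?_, Finset.mem_univ _⟩
      rintro rfl
      rcases Finset.mem_union.1 h with h | h
      · simp [H] at h
      · obtain ⟨ψ, h3, h4⟩ := Finset.mem_image.1 h
        rw [neg_eq_zero] at h4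
        subst h4
        simp [H] at h3
    have h1 := Finset.card_le_card h0
    rw [Finset.card_union_of_disjoint hd, Finset.card_image_of_injective _ neg_injective,
      Finset.card_erase_of_mem (Finset.mem_univ _), Finset.card_univ, Fintype.card_pi_const,
      ZMod.card] at h1
    omega
  · rintro χ h rfl
    simp [H] at h
  · intro χ hχ
    simp only [H, Finset.mem_filter, Finset.mem_univ, true_and, neg_neg]
    exact lt_or_gt_of_ne fun h => hneg χ hχ (rk.injective h)

end half

section colour
variable {V G : Type*} [Fintype V] [DecidableEq V] [Fintype G]

/-- A nonnegative function of a point `y` of the orthant which vanishes exactly when at most one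
vertex of `C` carries a positive coordinate. -/
def colr (C : Finset V) (y : V → ℝ) : ℝ :=
  ∑ v ∈ C, ∑ v' ∈ C, if v = v' then 0 else min (y v) (y v')

lemma colr_continuous (C : Finset V) : Continuous (colr C) := by
  unfold colr
  refine continuous_finsetSum _ fun v _ => continuous_finsetSum _ fun v' _ => ?_
  split_ifs <;> fun_prop

lemma colr_eq_zero_iff (C : Finset V) (y : V → ℝ) (hy : ∀ v, 0 ≤ y v) :
    colr C y = 0 ↔ ((Finset.univ.filter fun v => y v ≠ 0) ∩ C).card ≤ 1 := by
  have hterm : ∀ v v' : V, 0 ≤ (if v = v' then 0 else min (y v) (y v')) := by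
    intro v v'
    split_ifs
    · exact le_rfl
    · exact le_min (hy v) (hy v')
  rw [colr, Finset.sum_eq_zero_iff_of_nonneg fun v _ => Finset.sum_nonneg fun v' _ => hterm v v',
    Finset.card_le_one]
  simp only [Finset.sum_eq_zero_iff_of_nonneg fun v' _ => hterm _ v', Finset.mem_inter,
    Finset.mem_filter, Finset.mem_univ, true_and]
  constructor
  · rintro h a ⟨ha, haC⟩ b ⟨hb, hbC⟩
    by_contra hab
    have := h a haC b hbC
    rw [if_neg hab] at this
    have h1 : 0 < min (y a) (y b) :=
      lt_min ((hy a).lt_of_ne' ha) ((hy b).lt_of_ne' hb)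
    exact h1.ne' this
  · intro h a haC b hbC
    split_ifs with hab
    · rfl
    · by_cases ha : y a = 0
      · rw [ha]; exact min_eq_left (hy b)
      · by_cases hb : y b = 0
        · rw [hb]; exact min_eq_right (hy a)
        · exact absurd (h a ⟨ha, haC⟩ b ⟨hb, hbC⟩) hab

/-- If the colour counts of the points of a family with disjoint supports agree, they vanish,
as some point of the family uses at most one vertex of a class with fewer than `2 |G|` vertices. -/
lemma colr_zero (C : Finset V) [DecidableEq G] [Nonempty G] (hC : C.card ≤ 2 * Fintype.card G - 1)
    (w : V → G → ℝ) (hw : ∀ v g, 0 ≤ w v g) (hd : ∀ v g g', g ≠ g' → w v g * w v g' = 0)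
    (hc : ∀ g g', colr C (fun v => w v g) = colr C (fun v => w v g')) (g : G) :
    colr C (fun v => w v g) = 0 := by
  obtain ⟨g', hg'⟩ : ∃ g', ((Finset.univ.filter fun v => w v g' ≠ 0) ∩ C).card ≤ 1 := by
    by_contra hcon
    push Not at hcon
    have h1 : (Finset.univ.biUnion fun g => (Finset.univ.filter fun v => w v g ≠ 0) ∩ C).card
        = ∑ g, ((Finset.univ.filter fun v => w v g ≠ 0) ∩ C).card := by
      refine Finset.card_biUnion fun a _ b _ hab => ?_
      rw [Function.onFun, Finset.disjoint_left]
      intro v hv hv'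
      simp only [Finset.mem_inter, Finset.mem_filter, Finset.mem_univ, true_and] at hv hv'
      exact mul_ne_zero hv.1 hv'.1 (hd v a b hab)
    have h2 : (Finset.univ.biUnion fun g => (Finset.univ.filter fun v => w v g ≠ 0) ∩ C).card
        ≤ C.card := Finset.card_le_card (Finset.biUnion_subset.2 fun g _ => Finset.inter_subset_right)
    have h3 : ∑ _g : G, 2 ≤ ∑ g, ((Finset.univ.filter fun v => w v g ≠ 0) ∩ C).card :=
      Finset.sum_le_sum fun g _ => hcon g
    have h4 : 0 < Fintype.card G := Fintype.card_pos
    simp only [Finset.sum_const, Finset.card_univ, smul_eq_mul] at h3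
    omega
  rw [hc g g']
  exact (colr_eq_zero_iff C _ fun v => hw v g').2 hg'

end colour
end TTW

/-! ### Frames -/

namespace TTW

/-- Data producing an equivariant family of linear subspaces. From `S` nonzero vectors `z s` of
`𝕂^d`, each with its own action of `ℤ/p` through `e`, one forms linear functionals `φ t` (of weight
`wT t`) whose common kernel on real vectors lies in an `m`-dimensional subspace once the equations
`π a z = 0` (of weight `wP a`, triangular with leading entry `leadP a`) hold. The involution `tau`
realizes complex conjugation on the functionals; `coin` says that the `φ t` vanish wherever the `z s`
do, which serves to make the subspaces of different blocks coincide. -/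
structure Gadget (p : ℕ) (𝕂 : Type) [RCLike 𝕂] (e : AddChar (ZMod p) 𝕂) (d m : ℕ) where
  S : ℕ
  T : Type
  [fT : Fintype T]
  φ : T → (Fin S → Fin d → 𝕂) → Fin d → 𝕂
  φ_cont : ∀ t, Continuous (φ t)
  wT : T → Fin S → ZMod p
  φ_equiv : ∀ t z (h : Fin S → ZMod p),
    φ t (fun s i => e (h s) * z s i) = fun i => e (∑ s, wT t s * h s) * φ t z i
  tau : T → T
  φ_tau : ∀ t z i, φ (tau t) z i = (starRingEnd 𝕂) (φ t z i)
  P : Type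
  [fP : Fintype P]
  π : P → (Fin S → Fin d → 𝕂) → 𝕂
  π_cont : ∀ a, Continuous (π a)
  wP : P → Fin S → ZMod p
  π_equiv : ∀ a z (h : Fin S → ZMod p),
    π a (fun s i => e (h s) * z s i) = e (∑ s, wP a s * h s) * π a z
  leadP : P → Fin S
  wP_lead : ∀ a, wP a (leadP a) ≠ 0
  wP_lt : ∀ a s, s ≠ leadP a → wP a s ≠ 0 → leadP a < s
  card_T : Fintype.card T = d - m
  count : ∀ s, m + (Finset.univ.filter fun a => leadP a = s).card ≤ d - 1
  rank : ∀ z, (∀ s, z s ≠ 0) → (∀ a, π a z = 0) →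
    ∃ D : Submodule ℝ (EuclideanSpace ℝ (Fin d)), Module.finrank ℝ D = m ∧
      ∀ v : EuclideanSpace ℝ (Fin d), (∀ t, ∑ i, φ t z i * (v i : 𝕂) = 0) → v ∈ D
  coin : m = 0 ∨ ∀ z (v : EuclideanSpace ℝ (Fin d)),
    (∀ s, ∑ i, z s i * (v i : 𝕂) = 0) → ∀ t, ∑ i, φ t z i * (v i : 𝕂) = 0

attribute [instance] Gadget.fT Gadget.fP

lemma exists_kernel {d m : ℕ} (hmd : m ≤ d) {ι : Type} [Fintype ι] (hι : Fintype.card ι = d - m)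
    (w : ι → EuclideanSpace ℝ (Fin d)) (hw : LinearIndependent ℝ w) :
    ∃ D : Submodule ℝ (EuclideanSpace ℝ (Fin d)), Module.finrank ℝ D = m ∧
      ∀ v : EuclideanSpace ℝ (Fin d), (∀ t, ∑ i, w t i * v i = 0) → v ∈ D := by
  refine ⟨(Submodule.span ℝ (Set.range w))ᗮ, ?_, fun v hv => ?_⟩
  · have h1 := Submodule.finrank_add_finrank_orthogonal (Submodule.span ℝ (Set.range w))
    rw [finrank_span_eq_card hw, finrank_euclideanSpace_fin] at h1
    omega
  · rw [Submodule.mem_orthogonal]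
    intro u hu
    refine Submodule.span_induction (p := fun u _ => inner ℝ u v = 0) ?_ ?_ ?_ ?_ hu
    · rintro _ ⟨t, rfl⟩
      rw [← hv t]
      simp [PiLp.inner_apply, mul_comm]
    · simp
    · intro x y _ _ hx hy
      rw [inner_add_left, hx, hy, add_zero]
    · intro a x _ hx
      rw [inner_smul_left, hx, mul_zero]

lemma indep_of_orth {d : ℕ} {ι : Type} (w : ι → EuclideanSpace ℝ (Fin d))
    (h0 : ∀ t, w t ≠ 0) (h : ∀ s t, s ≠ t → ∑ i, w s i * w t i = 0) : LinearIndependent ℝ w := by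
  refine linearIndependent_of_ne_zero_of_inner_eq_zero h0 fun s t hst => ?_
  rw [← h s t hst]
  simp [PiLp.inner_apply, mul_comm]

/-- For `p = 2`: orthogonal frames of `d - m` real vectors. -/
def gadTwo (d m : ℕ) (hmd : m < d) : Gadget 2 ℝ eTwo d m where
  S := d - m
  T := Fin (d - m)
  φ t z := z t
  φ_cont t := by fun_prop
  wT t := Pi.single t 1
  φ_equiv t z h := by
    simp [Pi.single_apply]
  tau := id
  φ_tau t z i := rfl
  P := {a : Fin (d - m) × Fin (d - m) // a.1 < a.2}
  π a z := ∑ i, z a.1.1 i * z a.1.2 i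
  π_cont a := by fun_prop
  wP a := Pi.single a.1.1 1 + Pi.single a.1.2 1
  π_equiv a z h := by
    simp only [Pi.add_apply, add_mul, Finset.sum_add_distrib, Pi.single_apply, ite_mul, one_mul,
      zero_mul, Finset.sum_ite_eq', Finset.mem_univ, if_true, AddChar.map_add_eq_mul,
      Finset.mul_sum]
    exact Finset.sum_congr rfl fun i _ => by ring
  leadP a := a.1.1
  wP_lead a := by
    simp [a.2.ne]
  wP_lt a s h1 h2 := by
    have : s = a.1.2 := by
      by_contra h
      simp [h1, h] at h2
    rw [this]
    exact a.2
  card_T := by simp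
  count s := by
    have h : (Finset.univ.filter fun a : {a : Fin (d - m) × Fin (d - m) // a.1 < a.2} =>
        a.1.1 = s).card ≤ (Finset.univ.erase s).card := by
      refine Finset.card_le_card_of_injOn (fun a => a.1.2) ?_ ?_
      · intro a ha
        simp only [Finset.coe_filter, Finset.mem_univ, true_and, Set.mem_ofPred_eq] at ha
        simpa [← ha] using a.2.ne'
      · intro a ha b hb hab
        simp only [Finset.coe_filter, Finset.mem_univ, true_and, Set.mem_ofPred_eq] at ha hb
        exact Subtype.ext (Prod.ext (ha.trans hb.symm) hab)
    rw [Finset.card_erase_of_mem (Finset.mem_univ _), Finset.card_univ, Fintype.card_fin] at h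
    omega
  rank z hz hπ := by
    have h1 : ∀ s t, s ≠ t → ∑ i, z s i * z t i = 0 := by
      intro s t hst
      rcases lt_or_gt_of_ne hst with h | h
      · exact hπ ⟨(s, t), h⟩
      · rw [← hπ ⟨(t, s), h⟩]
        exact Finset.sum_congr rfl fun i _ => mul_comm _ _
    exact exists_kernel hmd.le (by simp) (fun t => WithLp.toLp 2 (z t))
      (indep_of_orth _ (fun t h => hz t (by simpa using h)) h1)
  coin := Or.inr fun z v h t => h t

/-- For `m = 0`: the coordinate functionals. -/
def gadZero (p : ℕ) (e : AddChar (ZMod p) ℂ) (d : ℕ) : Gadget p ℂ e d 0 where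
  S := 0
  T := Fin d
  φ t _ i := if i = t then 1 else 0
  φ_cont t := by fun_prop
  wT t := 0
  φ_equiv t z h := by simp
  tau := id
  φ_tau t z i := by simp only [id]; split_ifs <;> simp
  P := Empty
  π a := a.elim
  π_cont a := a.elim
  wP a := a.elim
  π_equiv a := a.elim
  leadP a := a.elim
  wP_lead a := a.elim
  wP_lt a := a.elim
  card_T := by simp
  count s := s.elim0
  rank z hz hπ := by
    refine ⟨⊥, by simp, fun v hv => ?_⟩
    rw [Submodule.mem_bot]
    ext t
    have := hv t
    simpa using this
  coin := Or.inl rfl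

/-- For odd `p` and `d - m = 2 k`: `k` complex vectors and their conjugates. The equations say
that the vectors are isotropic and orthogonal to each other both in the bilinear and in the Hermitian
sense, so that their real and imaginary parts form an orthogonal system. -/
def gadOdd (p : ℕ) [Fact p.Prime] (hp2 : p ≠ 2) (e : AddChar (ZMod p) ℂ) (d m k : ℕ) (hmd : m < d)
    (hk : d - m = 2 * k) : Gadget p ℂ e d m where
  S := k
  T := Fin k × Bool
  φ t z i := if t.2 then (starRingEnd ℂ) (z t.1 i) else z t.1 i
  φ_cont t := by
    rcases t with ⟨t, _ | _⟩
    · simp only [Bool.false_eq_true, if_false]; fun_prop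
    · simp only [if_true]; fun_prop
  wT t := Pi.single t.1 (if t.2 then -1 else 1)
  φ_equiv t z h := by
    rcases t with ⟨t, _ | _⟩
    · simp [Pi.single_apply]
    · simp [Pi.single_apply, ← AddChar.map_neg_eq_conj]
  tau t := (t.1, !t.2)
  φ_tau t z i := by
    rcases t with ⟨t, _ | _⟩ <;> simp
  P := {a : Fin k × Fin k × Bool // a.1 < a.2.1 ∨ (a.1 = a.2.1 ∧ a.2.2 = false)}
  π a z := ∑ i, z a.1.1 i * if a.1.2.2 then (starRingEnd ℂ) (z a.1.2.1 i) else z a.1.2.1 i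
  π_cont a := by
    rcases a with ⟨⟨s, t, _ | _⟩, h⟩
    · simp only [Bool.false_eq_true, if_false]; fun_prop
    · simp only [if_true]; fun_prop
  wP a := Pi.single a.1.1 1 + Pi.single a.1.2.1 (if a.1.2.2 then -1 else 1)
  π_equiv a z h := by
    rcases a with ⟨⟨s, t, _ | _⟩, hh⟩
    · simp only [Pi.add_apply, add_mul, Finset.sum_add_distrib, Pi.single_apply, ite_mul, one_mul,
        zero_mul, Finset.sum_ite_eq', Finset.mem_univ, if_true, AddChar.map_add_eq_mul,
        Finset.mul_sum, Bool.false_eq_true, if_false]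
      exact Finset.sum_congr rfl fun i _ => by ring
    · simp only [Pi.add_apply, add_mul, Finset.sum_add_distrib, Pi.single_apply, ite_mul, one_mul,
        zero_mul, Finset.sum_ite_eq', Finset.mem_univ, if_true, AddChar.map_add_eq_mul,
        Finset.mul_sum, neg_mul, AddChar.map_neg_eq_conj, map_mul]
      exact Finset.sum_congr rfl fun i _ => by ring
  leadP a := a.1.1
  wP_lead a := by
    have h2 : (2 : ZMod p) ≠ 0 := by
      intro h4
      have : ((2 : ℕ) : ZMod p) = 0 := by exact_mod_cast h4
      rw [ZMod.natCast_eq_zero_iff] at this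
      exact hp2 ((Nat.prime_dvd_prime_iff_eq Fact.out Nat.prime_two).1 this)
    rcases a with ⟨⟨s, t, b⟩, hh | ⟨hh, hb⟩⟩
    · simp only at hh
      simp [hh.ne]
    · simp only at hh hb
      subst hh hb
      simpa [one_add_one_eq_two] using h2
  wP_lt a s h1 h2 := by
    have h3 : s = a.1.2.1 := by
      by_contra h
      simp [h1, h] at h2
    rw [h3] at h1 ⊢
    rcases a.2 with h | h
    · exact h
    · exact absurd h.1.symm h1
  card_T := by simp [hk, mul_comm]
  count s := by
    have h : (Finset.univ.filter fun a : {a : Fin k × Fin k × Bool //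
        a.1 < a.2.1 ∨ (a.1 = a.2.1 ∧ a.2.2 = false)} =>
        a.1.1 = s).card ≤ (Finset.univ.erase (s, true)).card := by
      refine Finset.card_le_card_of_injOn (fun a => a.1.2) ?_ ?_
      · rintro ⟨⟨s', t, b⟩, hh⟩ ha
        simp only [Finset.coe_filter, Finset.mem_univ, true_and, Set.mem_ofPred_eq] at ha hh
        subst ha
        simp only [Finset.coe_erase, Finset.coe_univ, Set.mem_sdiff, Set.mem_univ, true_and,
          Set.mem_singleton_iff, Prod.mk.injEq, not_and]
        rintro rfl hb
        rcases hh with h | h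
        · exact lt_irrefl _ h
        · simp [hb] at h
      · intro a ha b hb hab
        simp only [Finset.coe_filter, Finset.mem_univ, true_and, Set.mem_ofPred_eq] at ha hb
        exact Subtype.ext (Prod.ext (ha.trans hb.symm) hab)
    rw [Finset.card_erase_of_mem (Finset.mem_univ _), Finset.card_univ, Fintype.card_prod,
      Fintype.card_fin, Fintype.card_bool] at h
    omega
  rank z hz hπ := by
    set w : Fin k × Bool → EuclideanSpace ℝ (Fin d) := fun t =>
      WithLp.toLp 2 fun i => if t.2 then (z t.1 i).im else (z t.1 i).re with hw
    -- real and imaginary parts of the bilinear and Hermitian products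
    have hbil : ∀ s t, s ≤ t → (∑ i, (z s i).re * (z t i).re = ∑ i, (z s i).im * (z t i).im) ∧
        (∑ i, (z s i).re * (z t i).im = -∑ i, (z s i).im * (z t i).re) := by
      intro s t hst
      have h := hπ ⟨(s, t, false), hst.lt_or_eq.imp id fun h => ⟨h, rfl⟩⟩
      simp only [Bool.false_eq_true, if_false] at h
      have h1 := congrArg Complex.re h
      have h2 := congrArg Complex.im h
      simp only [Complex.re_sum, Complex.im_sum, Complex.mul_re, Complex.mul_im,
        Finset.sum_sub_distrib, Finset.sum_add_distrib, Complex.zero_re, Complex.zero_im] at h1 h2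
      constructor <;> linarith
    have hher : ∀ s t, s < t → (∑ i, (z s i).re * (z t i).re = -∑ i, (z s i).im * (z t i).im) ∧
        (∑ i, (z s i).re * (z t i).im = ∑ i, (z s i).im * (z t i).re) := by
      intro s t hst
      have h := hπ ⟨(s, t, true), Or.inl hst⟩
      simp only [if_true] at h
      have h1 := congrArg Complex.re h
      have h2 := congrArg Complex.im h
      simp only [Complex.re_sum, Complex.im_sum, Complex.mul_re, Complex.mul_im, Complex.conj_re,
        Complex.conj_im, mul_neg, Finset.sum_neg_distrib,
        Finset.sum_sub_distrib, Finset.sum_add_distrib, Complex.zero_re, Complex.zero_im] at h1 h2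
      constructor <;> linarith
    have hlt : ∀ s t, s < t → ∀ b c, ∑ i, w (s, b) i * w (t, c) i = 0 := by
      intro s t hst b c
      obtain ⟨h1, h2⟩ := hbil s t hst.le
      obtain ⟨h3, h4⟩ := hher s t hst
      cases b <;> cases c <;> simp only [hw, if_true, Bool.false_eq_true, if_false] <;> linarith
    have hcomm : ∀ a b, ∑ i, w a i * w b i = ∑ i, w b i * w a i := fun a b =>
      Finset.sum_congr rfl fun i _ => mul_comm _ _
    have hself : ∀ s, ∑ i, w (s, false) i * w (s, true) i = 0 := by
      intro s
      obtain ⟨h1, h2⟩ := hbil s s le_rfl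
      have h3 : ∑ i, (z s i).im * (z s i).re = ∑ i, (z s i).re * (z s i).im :=
        Finset.sum_congr rfl fun i _ => mul_comm _ _
      simp only [hw, if_true, Bool.false_eq_true, if_false]
      linarith
    have horth : ∀ a b, a ≠ b → ∑ i, w a i * w b i = 0 := by
      rintro ⟨s, b⟩ ⟨t, c⟩ hne
      rcases lt_trichotomy s t with h | rfl | h
      · exact hlt s t h b c
      · cases b <;> cases c
        · exact absurd rfl hne
        · exact hself s
        · rw [hcomm]; exact hself s
        · exact absurd rfl hne
      · rw [hcomm]; exact hlt t s h c b
    have hzero : ∀ x : Fin d → ℝ, ∑ i, x i * x i = 0 → ∀ i, x i = 0 := by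
      intro x hx i
      have := (Finset.sum_eq_zero_iff_of_nonneg fun i _ => mul_self_nonneg (x i)).1 hx i
        (Finset.mem_univ i)
      exact mul_self_eq_zero.1 this
    have hne : ∀ t, w t ≠ 0 := by
      rintro ⟨s, b⟩ h0
      obtain ⟨h1, -⟩ := hbil s s le_rfl
      have hall : (∀ i, (z s i).re = 0) ∧ ∀ i, (z s i).im = 0 := by
        cases b
        · have h2 : ∀ i, (z s i).re = 0 := fun i => congrArg (fun v : EuclideanSpace ℝ (Fin d) => v i) h0
          exact ⟨h2, hzero _ (by rw [← h1]; simp [h2])⟩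
        · have h2 : ∀ i, (z s i).im = 0 := fun i => congrArg (fun v : EuclideanSpace ℝ (Fin d) => v i) h0
          exact ⟨hzero _ (by rw [h1]; simp [h2]), h2⟩
      exact hz s (funext fun i => Complex.ext (hall.1 i) (hall.2 i))
    obtain ⟨D, hD, hD'⟩ := exists_kernel hmd.le (by simp [hk, mul_comm]) w
      (indep_of_orth w hne horth)
    refine ⟨D, hD, fun v hv => hD' v ?_⟩
    rintro ⟨s, b⟩
    have h := hv (s, false)
    simp only [Bool.false_eq_true, if_false] at h
    have h1 := congrArg Complex.re h
    have h2 := congrArg Complex.im h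
    simp only [Complex.re_sum, Complex.im_sum, Complex.mul_re, Complex.mul_im, Complex.zero_re,
      Complex.zero_im, Complex.coe_algebraMap, Complex.ofReal_re, Complex.ofReal_im, mul_zero,
      sub_zero, zero_add] at h1 h2
    cases b <;> simp only [hw, if_true, Bool.false_eq_true, if_false]
    · exact h1
    · simpa using h2
  coin := by
    refine Or.inr fun z v h t => ?_
    rcases t with ⟨s, _ | _⟩
    · exact h s
    · have := congrArg (starRingEnd ℂ) (h s)
      simpa using this

section frame
variable {p : ℕ} [NeZero p] {𝕂 : Type} [RCLike 𝕂] (e : AddChar (ZMod p) 𝕂)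

/-- The vector of `𝕂^d` read off from a point of the join of `n + 1` copies of `ℤ/p`: the vertices
`q i, …, q i + q - 1` contribute to the coordinate `i`. -/
def frm (q d n : ℕ) (x : Fin (n + 1) → (Fin 1 → ZMod p) → ℝ) : Fin d → 𝕂 := fun i =>
  ∑ k ∈ Finset.univ.filter fun k : Fin (n + 1) => (k : ℕ) / q = i,
    ∑ h, (x k h : 𝕂) * e (h 0)

lemma frm_shift (q d n : ℕ) (x : Fin (n + 1) → (Fin 1 → ZMod p) → ℝ) (g : Fin 1 → ZMod p) :
    frm e q d n (fun k h => x k (h - g)) = fun i => e (g 0) * frm e q d n x i := by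
  funext i
  simp only [frm, Finset.mul_sum]
  refine Finset.sum_congr rfl fun k _ => ?_
  refine Fintype.sum_equiv (Equiv.subRight g) _ _ fun h => ?_
  simp only [Equiv.subRight_apply]
  rw [mul_left_comm, ← AddChar.map_add_eq_mul]
  simp

/-- Nonnegative combinations of at most `q` values of the character do not cancel. -/
def NoCancel (q : ℕ) : Prop := ∀ (n : ℕ) (A : Finset (Fin n)), A.card ≤ q → ∀ (a : Fin n → ℝ)
  (h : Fin n → ZMod p), (∀ k, 0 ≤ a k) → ∑ k ∈ A, (a k : 𝕂) * e (h k) = 0 → ∀ k ∈ A, a k = 0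

lemma frm_ne_zero (q d n : ℕ) (hq : 0 < q) (hd : 0 < d) (hn : n = q * (d - 1))
    (hnc : NoCancel e q) (x : Fin (n + 1) → (Fin 1 → ZMod p) → ℝ) (hx : ∀ k h, 0 ≤ x k h)
    (hs : ∑ k, ∑ h, x k h = 1) (hdis : ∀ k h h', h ≠ h' → x k h * x k h' = 0) :
    frm e q d n x ≠ 0 := by
  intro h0
  -- for each vertex, the group element carrying its weight
  have hex : ∀ k, ∃ h, ∀ h', h' ≠ h → x k h' = 0 := by
    intro k
    by_cases hk : ∃ h, x k h ≠ 0
    · obtain ⟨h, hh⟩ := hk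
      exact ⟨h, fun h' hne => (mul_eq_zero.1 (hdis k h' h hne)).resolve_right hh⟩
    · push Not at hk
      exact ⟨0, fun h' _ => hk h'⟩
  choose hh hhs using hex
  have hsum : ∀ k, ∑ h, (x k h : 𝕂) * e (h 0) = (x k (hh k) : 𝕂) * e (hh k 0) := by
    intro k
    refine Finset.sum_eq_single _ (fun h' _ hne => ?_) (by simp)
    rw [hhs k h' hne]
    simp
  have hz : ∀ k, x k (hh k) = 0 := by
    intro k
    have hlt : (k : ℕ) / q < d := by
      rw [Nat.div_lt_iff_lt_mul hq]
      calc (k : ℕ) < q * (d - 1) + 1 := by have := k.2; omega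
        _ ≤ q * (d - 1) + q := by omega
        _ = d * q := by
          obtain ⟨d', rfl⟩ : ∃ d', d = d' + 1 := ⟨d - 1, by omega⟩
          simp; ring
    have h1 := congrFun h0 ⟨(k : ℕ) / q, hlt⟩
    simp only [frm, hsum, Pi.zero_apply] at h1
    refine hnc _ _ ?_ (fun k => x k (hh k)) (fun k => hh k 0) (fun k => hx _ _) h1 k (by simp)
    have h2 : ((Finset.univ.filter fun k' : Fin (n + 1) => (k' : ℕ) / q = (k : ℕ) / q).card)
        ≤ (Finset.Ico (q * ((k : ℕ) / q)) (q * ((k : ℕ) / q) + q)).card := by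
      refine Finset.card_le_card_of_injOn (fun k' => (k' : ℕ)) ?_ ?_
      · intro k' hk'
        simp only [Finset.coe_filter, Finset.mem_univ, true_and, Set.mem_ofPred_eq] at hk'
        rw [Finset.mem_coe, Finset.mem_Ico, ← hk']
        exact ⟨Nat.mul_div_le _ _, Nat.lt_mul_div_succ _ hq⟩
      · intro a _ b _ hab
        exact Fin.ext hab
    simpa using h2
  have : ∀ k h, x k h = 0 := by
    intro k h
    by_cases hk : h = hh k
    · rw [hk, hz]
    · exact hhs k h hk
  simp [this] at hs

lemma noCancel_one (hne : ∀ k, e k ≠ 0) : NoCancel e 1 := by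
  intro n A hA a h ha hs k hk
  have : A = {k} := Finset.eq_singleton_iff_unique_mem.2
    ⟨hk, fun k' hk' => Finset.card_le_one.1 hA k' hk' k hk⟩
  rw [this, Finset.sum_singleton] at hs
  have := (mul_eq_zero.1 hs).resolve_right (hne _)
  exact_mod_cast this

/-- For odd `p` no two values of the character are opposite. -/
lemma noCancel_two (hp : Odd p) (hne : ∀ k, ‖e k‖ = 1) : NoCancel e 2 := by
  intro n A hA a h ha hs k hk
  have hne' : ∀ k, e k ≠ 0 := fun k => norm_ne_zero_iff.1 (by rw [hne]; exact one_ne_zero)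
  by_cases h1 : A.card ≤ 1
  · exact noCancel_one e hne' n A h1 a h ha hs k hk
  obtain ⟨k1, k2, h12, rfl⟩ := Finset.card_eq_two.1 (by omega : A.card = 2)
  rw [Finset.sum_pair h12] at hs
  have hpow : ∀ k : ZMod p, e k ^ p = 1 := by
    intro k
    rw [← AddChar.map_nsmul_eq_pow]
    simp
  have heq : (a k1 : 𝕂) * e (h k1) = -((a k2 : 𝕂) * e (h k2)) := eq_neg_of_add_eq_zero_left hs
  have hp2 := congrArg (· ^ p) heq
  simp only [mul_pow, hpow, mul_one, hp.neg_pow] at hp2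
  have h3 : a k1 ^ p = - a k2 ^ p := by exact_mod_cast hp2
  have n1 := pow_nonneg (ha k1) p
  have n2 := pow_nonneg (ha k2) p
  have z1 : a k1 = 0 := pow_eq_zero_iff (NeZero.ne p) |>.1 (by linarith)
  have z2 : a k2 = 0 := pow_eq_zero_iff (NeZero.ne p) |>.1 (by linarith)
  simp only [Finset.mem_insert, Finset.mem_singleton] at hk
  rcases hk with rfl | rfl
  · exact z1
  · exact z2

end frame
end TTW

/-! ### The test functions -/

namespace TTW

section test
variable {p : ℕ} [Fact p.Prime] {𝕂 : Type} [RCLike 𝕂] {e : AddChar (ZMod p) 𝕂} {q d m : ℕ}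
  (G : Gadget p 𝕂 e d m) (q) (en N : Fin (m + 1) → ℕ)

/-- Ranks of the groups of the blocks: `S` blocks for the frame vectors, `m + 1` blocks for the
simplices. -/
abbrev epsG : Fin G.S ⊕ Fin (m + 1) → ℕ := Sum.elim (fun _ => 1) en

/-- Dimensions of the simplices of the blocks. -/
abbrev nnG : Fin G.S ⊕ Fin (m + 1) → ℕ := Sum.elim (fun _ => q * (d - 1)) N

/-- The configuration space. -/
abbrev SpG := Sp p (epsG G en) (nnG G q N)

variable {q en N}

/-- The component of a point in the frame block `s`. -/
def xf (x : SpG G q en N) (s : Fin G.S) : Fin (q * (d - 1) + 1) → (Fin 1 → ZMod p) → ℝ :=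
  x (Sum.inl s)

/-- The component of a point in the block of the simplex `ℓ`. -/
def xb (x : SpG G q en N) (ℓ : Fin (m + 1)) : Fin (N ℓ + 1) → (Fin (en ℓ) → ZMod p) → ℝ :=
  x (Sum.inr ℓ)

/-- The component of a group element in a frame block. -/
def gf (g : Idx (epsG G en) → ZMod p) (s : Fin G.S) : Fin 1 → ZMod p := fun j => g ⟨Sum.inl s, j⟩

/-- The component of a group element in a simplex block. -/
def gb (g : Idx (epsG G en) → ZMod p) (ℓ : Fin (m + 1)) : Fin (en ℓ) → ZMod p :=
  fun j => g ⟨Sum.inr ℓ, j⟩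

lemma xf_rho (g : Idx (epsG G en) → ZMod p) (x : SpG G q en N) (s : Fin G.S) :
    xf G (rho p (epsG G en) (nnG G q N) g x) s = fun k h => xf G x s k (h - gf G g s) := rfl

lemma xb_rho (g : Idx (epsG G en) → ZMod p) (x : SpG G q en N) (ℓ : Fin (m + 1)) :
    xb G (rho p (epsG G en) (nnG G q N) g x) ℓ = fun k h => xb G x ℓ k (h - gb G g ℓ) := rfl

/-- The weight with given components. -/
def wts (A : Fin G.S → ZMod p) (D : ∀ ℓ, Fin (en ℓ) → ZMod p) : Idx (epsG G en) → ZMod p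
  | ⟨Sum.inl s, _⟩ => A s
  | ⟨Sum.inr ℓ, j⟩ => D ℓ j

lemma sum_wts (A : Fin G.S → ZMod p) (D : ∀ ℓ, Fin (en ℓ) → ZMod p)
    (g : Idx (epsG G en) → ZMod p) : ∑ i, wts G A D i * g i
      = ∑ s, A s * gf G g s 0 + ∑ ℓ, ∑ j, D ℓ j * gb G g ℓ j := by
  rw [Fintype.sum_sigma, Fintype.sum_sum_type]
  congr 1
  refine Finset.sum_congr rfl fun s _ => ?_
  exact Fin.sum_univ_one _

lemma sum_wts_single (A : Fin G.S → ZMod p) (ℓ : Fin (m + 1)) (χ : Fin (en ℓ) → ZMod p)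
    (g : Idx (epsG G en) → ZMod p) : ∑ i, wts G A (Pi.single ℓ χ) i * g i
      = ∑ s, A s * gf G g s 0 + ∑ j, χ j * gb G g ℓ j := by
  rw [sum_wts]
  congr 1
  rw [Finset.sum_eq_single ℓ]
  · simp
  · intro ℓ' _ h
    rw [Pi.single_eq_of_ne h]
    simp
  · simp

/-- The frame vectors. -/
def zz (x : SpG G q en N) (s : Fin G.S) : Fin d → 𝕂 := frm e q d _ (xf G x s)

lemma zz_rho (g : Idx (epsG G en) → ZMod p) (x : SpG G q en N) :
    zz G (rho p (epsG G en) (nnG G q N) g x) = fun s i => e (gf G g s 0) * zz G x s i := by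
  funext s
  rw [zz, xf_rho, frm_shift]
  rfl

lemma zz_cont : Continuous (zz G : SpG G q en N → _) := by
  refine continuous_pi fun s => continuous_pi fun i => ?_
  unfold zz frm
  refine continuous_finsetSum _ fun k _ => continuous_finsetSum _ fun h _ => ?_
  refine Continuous.mul (RCLike.continuous_ofReal.comp ?_) continuous_const
  unfold xf
  fun_prop

variable (C : ∀ ℓ : Fin (m + 1), Fin (d + 1) → Finset (Fin (N ℓ + 1)))
  (f : ∀ ℓ : Fin (m + 1), EuclideanSpace ℝ (Fin (N ℓ + 1)) → EuclideanSpace ℝ (Fin d))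

/-- The scalar invariants of a point: total weight and the colour counts. -/
def Qs (ℓ : Fin (m + 1)) : Option (Fin (d + 1)) → (Fin (N ℓ + 1) → ℝ) → ℝ
  | none, y => ∑ k, y k
  | some i, y => colr (C ℓ i) y

lemma Qs_cont (ℓ : Fin (m + 1)) (o : Option (Fin (d + 1))) : Continuous (Qs C ℓ o) := by
  cases o with
  | none => unfold Qs; fun_prop
  | some i => exact colr_continuous _

/-- Fourier coefficients of the scalar invariants. -/
def Y1 (ℓ : Fin (m + 1)) (χ : Fin (en ℓ) → ZMod p) (o : Option (Fin (d + 1))) (x : SpG G q en N) :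
    𝕂 := four e χ fun g => (Qs C ℓ o (fun k => xb G x ℓ k g) : 𝕂)

/-- Fourier coefficients of the images under the functionals `φ t`. -/
def Y2 (ℓ : Fin (m + 1)) (χ : Fin (en ℓ) → ZMod p) (t : G.T) (x : SpG G q en N) : 𝕂 :=
  ∑ j, G.φ t (zz G x) j * four e χ fun g => (hom (f ℓ) (fun k => xb G x ℓ k g) j : 𝕂)

/-- The barycentre of the images in block `ℓ`. -/
def bb (ℓ : Fin (m + 1)) (x : SpG G q en N) : EuclideanSpace ℝ (Fin d) :=
  ∑ g, hom (f ℓ) (fun k => xb G x ℓ k g)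

/-- The frame vector `s` evaluated on the difference of two barycentres. -/
def Y4 (s : Fin G.S) (ℓ : Fin m) (x : SpG G q en N) : 𝕂 :=
  ∑ j, zz G x s j * ((bb G f ℓ.succ x - bb G f 0 x) j : 𝕂)

lemma Y1_rho (ℓ χ o) (g : Idx (epsG G en) → ZMod p) (x : SpG G q en N) :
    Y1 G C ℓ χ o (rho p (epsG G en) (nnG G q N) g x)
      = e (∑ j, χ j * gb G g ℓ j) * Y1 G C ℓ χ o x :=
  four_shift χ (fun g => (Qs C ℓ o (fun k => xb G x ℓ k g) : 𝕂)) (gb G g ℓ)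

lemma Y2_rho (ℓ χ t) (g : Idx (epsG G en) → ZMod p) (x : SpG G q en N) :
    Y2 G f ℓ χ t (rho p (epsG G en) (nnG G q N) g x)
      = e (∑ s, G.wT t s * gf G g s 0 + ∑ j, χ j * gb G g ℓ j) * Y2 G f ℓ χ t x := by
  unfold Y2
  rw [zz_rho, G.φ_equiv t (zz G x) (fun s => gf G g s 0), Finset.mul_sum]
  refine Finset.sum_congr rfl fun j _ => ?_
  have := four_shift (e := e) χ (fun g => (hom (f ℓ) (fun k => xb G x ℓ k g) j : 𝕂)) (gb G g ℓ)
  rw [xb_rho, this, AddChar.map_add_eq_mul]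
  ring

lemma bb_rho (ℓ) (g : Idx (epsG G en) → ZMod p) (x : SpG G q en N) :
    bb G f ℓ (rho p (epsG G en) (nnG G q N) g x) = bb G f ℓ x :=
  Fintype.sum_equiv (Equiv.subRight (gb G g ℓ)) _ _ fun _ => rfl

lemma Y4_rho (s ℓ) (g : Idx (epsG G en) → ZMod p) (x : SpG G q en N) :
    Y4 G f s ℓ (rho p (epsG G en) (nnG G q N) g x) = e (gf G g s 0) * Y4 G f s ℓ x := by
  unfold Y4
  rw [zz_rho, bb_rho, bb_rho, Finset.mul_sum]
  exact Finset.sum_congr rfl fun j _ => mul_assoc _ _ _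

lemma Y1_cont (ℓ χ o) : Continuous (Y1 G C ℓ χ o : SpG G q en N → 𝕂) := by
  unfold Y1 four
  refine continuous_finsetSum _ fun g _ => continuous_const.mul (RCLike.continuous_ofReal.comp
    ((Qs_cont C ℓ o).comp ?_))
  unfold xb
  fun_prop

lemma hom_cont (hf : ∀ ℓ, ContinuousOn (f ℓ) (stdSimp (N ℓ)))
    (ℓ : Fin (m + 1)) (g : Fin (en ℓ) → ZMod p) :
    ContinuousOn (fun x : SpG G q en N => hom (f ℓ) (fun k => xb G x ℓ k g))
      (XX p (epsG G en) (nnG G q N)) := by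
  refine (hom_continuousOn (hf ℓ)).comp (Continuous.continuousOn ?_)
    fun x hx k => hx.1 (Sum.inr ℓ) k g
  unfold xb
  fun_prop

lemma coord_cont {X : Type*} [TopologicalSpace X] {s : Set X} {h : X → EuclideanSpace ℝ (Fin d)}
    (hh : ContinuousOn h s) (j : Fin d) : ContinuousOn (fun x => ((h x j : ℝ) : 𝕂)) s := by
  refine RCLike.continuous_ofReal.comp_continuousOn ?_
  exact (PiLp.continuous_apply 2 (fun _ : Fin d => ℝ) j).comp_continuousOn hh

lemma Y2_cont (hf : ∀ ℓ, ContinuousOn (f ℓ) (stdSimp (N ℓ))) (ℓ χ t) :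
    ContinuousOn (Y2 G f ℓ χ t : SpG G q en N → 𝕂) (XX p (epsG G en) (nnG G q N)) := by
  unfold Y2 four
  refine continuousOn_finsetSum _ fun j _ => ContinuousOn.mul ?_ ?_
  · exact (((continuous_apply j).comp (G.φ_cont t)).comp (zz_cont G)).continuousOn
  · exact continuousOn_finsetSum _ fun g _ => continuousOn_const.mul
      (coord_cont (hom_cont G f hf ℓ g) j)

lemma Y4_cont (hf : ∀ ℓ, ContinuousOn (f ℓ) (stdSimp (N ℓ))) (s ℓ) :
    ContinuousOn (Y4 G f s ℓ : SpG G q en N → 𝕂) (XX p (epsG G en) (nnG G q N)) := by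
  unfold Y4
  refine continuousOn_finsetSum _ fun j _ => ContinuousOn.mul ?_ ?_
  · exact ((continuous_apply j).comp ((continuous_apply s).comp (zz_cont G))).continuousOn
  · refine coord_cont (ContinuousOn.sub ?_ ?_) j
    · exact continuousOn_finsetSum _ fun g _ => hom_cont G f hf _ g
    · exact continuousOn_finsetSum _ fun g _ => hom_cont G f hf _ g

lemma exists_first {n : ℕ} (χ : Fin n → ZMod p) (hχ : χ ≠ 0) :
    ∃ j, χ j ≠ 0 ∧ ∀ j', j' ≠ j → χ j' ≠ 0 → j < j' := by
  classical
  obtain ⟨j0, hj0⟩ := Function.ne_iff.1 hχ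
  have hne : (Finset.univ.filter fun j => χ j ≠ 0).Nonempty := ⟨j0, by simpa using hj0⟩
  refine ⟨(Finset.univ.filter fun j => χ j ≠ 0).min' hne, ?_, fun j' h1 h2 => ?_⟩
  · exact (Finset.mem_filter.1 (Finset.min'_mem _ hne)).2
  · exact lt_of_le_of_ne (Finset.min'_le _ _ (by simpa using h2)) h1.symm

lemma card_fst_eq {α β : Type*} [Fintype α] [DecidableEq α] [Fintype β] (s : α) :
    (Finset.univ.filter fun x : α × β => x.1 = s).card = Fintype.card β := by
  rw [Finset.card_filter, Fintype.sum_prod_type, Finset.sum_eq_single s (by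
    intro a _ ha; simp [ha]) (by simp)]
  simp

lemma card_sigma_fst_eq {α : Type*} {β : α → Type*} [Fintype α] [DecidableEq α]
    [∀ a, Fintype (β a)] (s : α) :
    (Finset.univ.filter fun x : Σ a, β a => x.1 = s).card = Fintype.card (β s) := by
  rw [Finset.card_filter, Fintype.sum_sigma, Finset.sum_eq_single s (by
    intro a _ ha; simp [ha]) (by simp)]
  simp

/-- A common zero of all the test functions. -/
lemma exists_point (hBU : BU p 𝕂 q e) (hmd : m < d)
    (hf : ∀ ℓ, ContinuousOn (f ℓ) (stdSimp (N ℓ)))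
    (hN : ∀ ℓ, N ℓ = (p ^ en ℓ - 1) * (2 * d + 2 - m))
    (Hf : ∀ ℓ, Finset (Fin (en ℓ) → ZMod p)) (hH1 : ∀ ℓ, q * (Hf ℓ).card ≤ p ^ en ℓ - 1)
    (hH2 : ∀ ℓ, ∀ χ ∈ Hf ℓ, χ ≠ 0) :
    ∃ x ∈ XX p (epsG G en) (nnG G q N), (∀ ℓ, ∀ χ ∈ Hf ℓ, ∀ o, Y1 G C ℓ χ o x = 0) ∧
      (∀ ℓ, ∀ χ ∈ Hf ℓ, ∀ t, Y2 G f ℓ χ t x = 0) ∧ (∀ a, G.π a (zz G x) = 0) ∧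
      ∀ s ℓ, Y4 G f s ℓ x = 0 := by
  classical
  choose fst hfst1 hfst2 using fun ℓ (χ : Hf ℓ) => exists_first χ.1 (hH2 ℓ χ.1 χ.2)
  let B := (Σ ℓ, Hf ℓ × (Option (Fin (d + 1)) ⊕ G.T)) ⊕ (G.P ⊕ Fin G.S × Fin m)
  let χ : B → Idx (epsG G en) → ZMod p := fun b => match b with
    | Sum.inl ⟨ℓ, χ, Sum.inl _⟩ => wts G 0 (Pi.single ℓ χ.1)
    | Sum.inl ⟨ℓ, χ, Sum.inr t⟩ => wts G (G.wT t) (Pi.single ℓ χ.1)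
    | Sum.inr (Sum.inl a) => wts G (G.wP a) 0
    | Sum.inr (Sum.inr (s, _)) => wts G (Pi.single s 1) 0
  let F : B → SpG G q en N → 𝕂 := fun b => match b with
    | Sum.inl ⟨ℓ, χ, Sum.inl o⟩ => Y1 G C ℓ χ.1 o
    | Sum.inl ⟨ℓ, χ, Sum.inr t⟩ => Y2 G f ℓ χ.1 t
    | Sum.inr (Sum.inl a) => fun x => G.π a (zz G x)
    | Sum.inr (Sum.inr (s, ℓ)) => Y4 G f s ℓ
  let lead : B → Idx (epsG G en) := fun b => match b with
    | Sum.inl ⟨ℓ, χ, _⟩ => ⟨Sum.inr ℓ, fst ℓ χ⟩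
    | Sum.inr (Sum.inl a) => ⟨Sum.inl (G.leadP a), (0 : Fin 1)⟩
    | Sum.inr (Sum.inr (s, _)) => ⟨Sum.inl s, (0 : Fin 1)⟩
  -- the frame indices come after all simplex indices
  let wt : Idx (epsG G en) → ℕ := fun i => match i with
    | ⟨Sum.inl s, _⟩ => (∑ ℓ, en ℓ) + s
    | ⟨Sum.inr ℓ, j⟩ => (j : Fin (en ℓ))
  have hbig : ∀ (ℓ : Fin (m + 1)) (j : Fin (en ℓ)) (s : Fin G.S), (j : ℕ) < (∑ ℓ, en ℓ) + s := by
    intro ℓ j s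
    have := Finset.single_le_sum (f := en) (fun _ _ => Nat.zero_le _) (Finset.mem_univ ℓ)
    omega
  have hblock : ∀ (ℓ : Fin (m + 1)) (χ : Hf ℓ) (A : Fin G.S → ZMod p),
      ∀ i : Idx (epsG G en), i ≠ ⟨Sum.inr ℓ, fst ℓ χ⟩ → wts G A (Pi.single ℓ χ.1) i ≠ 0 →
        wt ⟨Sum.inr ℓ, fst ℓ χ⟩ < wt i := by
    rintro ℓ χ A ⟨s | ℓ', j⟩ h1 h2
    · exact hbig ℓ _ s
    · have hℓ : ℓ' = ℓ := by
        by_contra h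
        apply h2
        change (Pi.single ℓ χ.1 : ∀ ℓ, Fin (en ℓ) → ZMod p) ℓ' j = 0
        rw [Pi.single_eq_of_ne h]
        rfl
      subst hℓ
      change (Pi.single ℓ' χ.1 : ∀ ℓ, Fin (en ℓ) → ZMod p) ℓ' j ≠ 0 at h2
      rw [Pi.single_eq_same] at h2
      exact hfst2 ℓ' χ j (fun h => h1 (by rw [h])) h2
  have key : ∃ x ∈ XX p (epsG G en) (nnG G q N), ∀ b, F b x = 0 := by
    refine hBU (Fin G.S ⊕ Fin (m + 1)) (epsG G en) (nnG G q N) B χ lead wt ?_ ?_ ?_ F ?_ ?_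
    · have hs : ∀ (ℓ : Fin (m + 1)) (χ : Hf ℓ) (A : Fin G.S → ZMod p),
          wts G A (Pi.single ℓ χ.1) ⟨Sum.inr ℓ, fst ℓ χ⟩ ≠ 0 := by
        intro ℓ χ A
        change (Pi.single ℓ χ.1 : ∀ ℓ, Fin (en ℓ) → ZMod p) ℓ (fst ℓ χ) ≠ 0
        rw [Pi.single_eq_same]
        exact hfst1 ℓ χ
      rintro (⟨ℓ, χ, o | t⟩ | a | ⟨s, ℓ⟩)
      · exact hs ℓ χ _
      · exact hs ℓ χ _
      · exact G.wP_lead a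
      · change (Pi.single s 1 : Fin G.S → ZMod p) s ≠ 0
        simp
    · rintro (⟨ℓ, χ, o | t⟩ | a | ⟨s, ℓ⟩)
      · exact hblock ℓ χ _
      · exact hblock ℓ χ _
      · rintro ⟨s | ℓ', j⟩ h1 h2
        · have h3 : s ≠ G.leadP a := by
            rintro rfl
            apply h1
            have : j = (0 : Fin 1) := Subsingleton.elim (α := Fin 1) _ _
            rw [this]
          have := G.wP_lt a s h3 h2
          exact Nat.add_lt_add_left this _
        · exact absurd rfl h2
      · rintro ⟨s' | ℓ', j⟩ h1 h2
        · exfalso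
          have h3 : s' ≠ s := by
            rintro rfl
            apply h1
            have : j = (0 : Fin 1) := Subsingleton.elim (α := Fin 1) _ _
            rw [this]
          apply h2
          change (Pi.single s 1 : Fin G.S → ZMod p) s' = 0
          rw [Pi.single_eq_of_ne h3]
        · exact absurd rfl h2
    · rintro (s | ℓ)
      · change q * _ ≤ q * (d - 1)
        refine Nat.mul_le_mul_left _ ((le_of_eq ?_).trans (G.count s))
        rw [Finset.card_filter, Fintype.sum_sum_type, Fintype.sum_sum_type]
        rw [Finset.card_filter]
        simp only [lead, Finset.sum_boole]
        simp [card_fst_eq, add_comm]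
      · change q * _ ≤ N ℓ
        have hc : (Finset.univ.filter fun b => (lead b).1 = Sum.inr ℓ).card
            = (Hf ℓ).card * (2 * d + 2 - m) := by
          rw [Finset.card_filter, Fintype.sum_sum_type, Fintype.sum_sum_type]
          have h1 := card_sigma_fst_eq (β := fun ℓ => Hf ℓ × (Option (Fin (d + 1)) ⊕ G.T)) ℓ
          have h2 : d + 1 + 1 + (d - m) = 2 * d + 2 - m := by omega
          rw [← h2]
          simp only [Finset.card_filter, Fintype.card_prod, Fintype.card_sum, Fintype.card_option,
            Fintype.card_fin, Fintype.card_coe, G.card_T] at h1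
          rw [← h1]
          simp [lead]
        rw [hc, hN, ← mul_assoc]
        exact Nat.mul_le_mul_right _ (hH1 ℓ)
    · rintro (⟨ℓ, χ, o | t⟩ | a | ⟨s, ℓ⟩)
      · exact (Y1_cont G C ℓ χ.1 o).continuousOn
      · exact Y2_cont G f hf ℓ χ.1 t
      · exact ((G.π_cont a).comp (zz_cont G)).continuousOn
      · exact Y4_cont G f hf s ℓ
    · rintro (⟨ℓ, χ, o | t⟩ | a | ⟨s, ℓ⟩) g x -
      · change Y1 G C ℓ χ.1 o _ = e (∑ i, wts G 0 (Pi.single ℓ χ.1) i * g i) * Y1 G C ℓ χ.1 o x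
        rw [sum_wts_single, Y1_rho]
        simp
      · change Y2 G f ℓ χ.1 t _
          = e (∑ i, wts G (G.wT t) (Pi.single ℓ χ.1) i * g i) * Y2 G f ℓ χ.1 t x
        rw [sum_wts_single, Y2_rho]
      · change G.π a (zz G _) = e (∑ i, wts G (G.wP a) 0 i * g i) * G.π a (zz G x)
        rw [sum_wts, zz_rho, G.π_equiv a (zz G x) (fun s => gf G g s 0)]
        simp
      · change Y4 G f s ℓ _ = e (∑ i, wts G (Pi.single s 1) 0 i * g i) * Y4 G f s ℓ x
        rw [sum_wts, Y4_rho]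
        simp [Pi.single_apply]
  obtain ⟨x, hx, h⟩ := key
  exact ⟨x, hx, fun ℓ χ hχ o => h (Sum.inl ⟨ℓ, ⟨χ, hχ⟩, Sum.inl o⟩),
    fun ℓ χ hχ t => h (Sum.inl ⟨ℓ, ⟨χ, hχ⟩, Sum.inr t⟩), fun a => h (Sum.inr (Sum.inl a)),
    fun s ℓ => h (Sum.inr (Sum.inr (s, ℓ)))⟩

end test
end TTW

/-! ### From a common zero to a transversal -/

namespace TTW

section final
variable {p : ℕ} [Fact p.Prime] {𝕂 : Type} [RCLike 𝕂] {e : AddChar (ZMod p) 𝕂} {q d m : ℕ}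
  (G : Gadget p 𝕂 e d m) {en N : Fin (m + 1) → ℕ}
  (C : ∀ ℓ : Fin (m + 1), Fin (d + 1) → Finset (Fin (N ℓ + 1)))
  (f : ∀ ℓ : Fin (m + 1), EuclideanSpace ℝ (Fin (N ℓ + 1)) → EuclideanSpace ℝ (Fin d))

lemma Y2_eq (ℓ : Fin (m + 1)) (χ : Fin (en ℓ) → ZMod p) (t : G.T) (x : SpG G q en N) :
    Y2 G f ℓ χ t x = four e χ fun g =>
      ∑ j, G.φ t (zz G x) j * (hom (f ℓ) (fun k => xb G x ℓ k g) j : 𝕂) := by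
  unfold Y2 four
  simp only [Finset.mul_sum]
  rw [Finset.sum_comm]
  exact Finset.sum_congr rfl fun g _ => Finset.sum_congr rfl fun j _ => by ring

lemma Y1_neg (ℓ : Fin (m + 1)) (χ : Fin (en ℓ) → ZMod p) (o) (x : SpG G q en N) :
    Y1 G C ℓ (-χ) o x = (starRingEnd 𝕂) (Y1 G C ℓ χ o x) := by
  unfold Y1
  rw [four_neg]
  simp only [RCLike.conj_ofReal]

lemma Y2_neg (ℓ : Fin (m + 1)) (χ : Fin (en ℓ) → ZMod p) (t : G.T) (x : SpG G q en N) :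
    Y2 G f ℓ (-χ) t x = (starRingEnd 𝕂) (Y2 G f ℓ χ (G.tau t) x) := by
  rw [Y2_eq, Y2_eq, four_neg]
  simp only [map_sum, map_mul, RCLike.conj_ofReal, G.φ_tau]

lemma sum_phi_bb (ℓ : Fin (m + 1)) (t : G.T) (x : SpG G q en N) :
    ∑ j, G.φ t (zz G x) j * (bb G f ℓ x j : 𝕂)
      = ∑ g, ∑ j, G.φ t (zz G x) j * (hom (f ℓ) (fun k => xb G x ℓ k g) j : 𝕂) := by
  rw [Finset.sum_comm]
  refine Finset.sum_congr rfl fun j _ => ?_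
  rw [← Finset.mul_sum, bb]
  congr 1
  rw [WithLp.ofLp_sum, Finset.sum_apply]
  push_cast
  rfl

/-- The transversal theorem, given a Borsuk–Ulam property, a gadget and a half system `Hf` of
characters. -/
theorem transversal (G : Gadget p 𝕂 e d m) (hBU : BU p 𝕂 q e) (hmd : m < d) (hq : 0 < q)
    (he : e ≠ 1)
    (hnc : NoCancel e q)
    (hf : ∀ ℓ, ContinuousOn (f ℓ) (stdSimp (N ℓ)))
    (hN : ∀ ℓ, N ℓ = (p ^ en ℓ - 1) * (2 * d + 2 - m))
    (hC : ∀ ℓ i, (C ℓ i).card ≤ 2 * p ^ en ℓ - 1)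
    (hH : ∀ n, ∃ H : Finset (Fin n → ZMod p), q * H.card ≤ p ^ n - 1 ∧
      (∀ χ ∈ H, χ ≠ 0) ∧ ∀ χ, χ ≠ 0 → χ ∈ H ∨ -χ ∈ H) :
    ∃ L : AffineSubspace ℝ (EuclideanSpace ℝ (Fin d)),
      (L : Set (EuclideanSpace ℝ (Fin d))).Nonempty ∧
      Module.finrank ℝ L.direction = m ∧
      ∀ ℓ : Fin (m + 1), ∃ σ : Fin (p ^ en ℓ) → Finset (Fin (N ℓ + 1)),
        (∀ j, (σ j).Nonempty) ∧
        (∀ j j', j ≠ j' → Disjoint (σ j) (σ j')) ∧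
        (∀ j, ∀ i : Fin (d + 1), (σ j ∩ C ℓ i).card ≤ 1) ∧
        (∀ j, (f ℓ '' simpFace (N ℓ) (σ j) ∩
          (L : Set (EuclideanSpace ℝ (Fin d)))).Nonempty) := by
  classical
  choose H hH1 hH2 hH3 using hH
  obtain ⟨x, hx, h1, h2, hπ, h4⟩ := exists_point (en := en) (N := N) G C f hBU hmd hf hN
    (fun ℓ => H (en ℓ)) (fun ℓ => hH1 (en ℓ)) (fun ℓ => hH2 (en ℓ))
  have hz : ∀ s, zz G x s ≠ 0 := fun s =>
    frm_ne_zero e q d (q * (d - 1)) hq (by omega) rfl hnc (xf G x s)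
      (hx.1 (Sum.inl s)) (hx.2.1 (Sum.inl s)) (hx.2.2 (Sum.inl s))
  have h1' : ∀ ℓ χ, χ ≠ 0 → ∀ o, Y1 G C ℓ χ o x = 0 := by
    intro ℓ χ hχ o
    rcases hH3 _ χ hχ with h | h
    · exact h1 ℓ χ h o
    · rw [← neg_neg χ, Y1_neg, h1 ℓ _ h o, map_zero]
  have h2' : ∀ ℓ χ, χ ≠ 0 → ∀ t, Y2 G f ℓ χ t x = 0 := by
    intro ℓ χ hχ t
    rcases hH3 _ χ hχ with h | h
    · exact h2 ℓ χ h t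
    · rw [← neg_neg χ, Y2_neg, h2 ℓ _ h, map_zero]
  have hr : ∀ n, (0 : ℝ) < (p ^ n : ℕ) := fun n =>
    Nat.cast_pos.2 (pow_pos (Fact.out : p.Prime).pos n)
  have hQ : ∀ ℓ o g, ((p ^ en ℓ : ℕ) : ℝ) * Qs C ℓ o (fun k => xb G x ℓ k g)
      = ∑ g, Qs C ℓ o (fun k => xb G x ℓ k g) := by
    intro ℓ o g
    have := four_const he _ (fun χ hχ => h1' ℓ χ hχ o) g
    exact_mod_cast this
  have hnn : ∀ ℓ k g, 0 ≤ xb G x ℓ k g := fun ℓ => hx.1 (Sum.inr ℓ)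
  have hdis : ∀ ℓ k g g', g ≠ g' → xb G x ℓ k g * xb G x ℓ k g' = 0 := fun ℓ => hx.2.2 (Sum.inr ℓ)
  -- every group element carries the same weight
  have hlam : ∀ ℓ g, ((p ^ en ℓ : ℕ) : ℝ) * ∑ k, xb G x ℓ k g = 1 := by
    intro ℓ g
    rw [← hx.2.1 (Sum.inr ℓ), Finset.sum_comm]
    exact hQ ℓ none g
  have hpos : ∀ ℓ g, 0 < ∑ k, xb G x ℓ k g := by
    intro ℓ g
    have := hlam ℓ g
    exact pos_of_mul_pos_right (by rw [this]; exact one_pos) (hr _).le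
  have hcol : ∀ ℓ i g, colr (C ℓ i) (fun k => xb G x ℓ k g) = 0 := by
    intro ℓ i g
    refine colr_zero (C ℓ i) (by simpa [ZMod.card] using hC ℓ i) (xb G x ℓ) (hnn ℓ) (hdis ℓ) ?_ g
    intro g g'
    exact mul_left_cancel₀ (hr _).ne' ((hQ ℓ (some i) g).trans (hQ ℓ (some i) g').symm)
  obtain ⟨D, hD, hDm⟩ := G.rank (zz G x) hz hπ
  let xh : ∀ ℓ, (Fin (en ℓ) → ZMod p) → EuclideanSpace ℝ (Fin (N ℓ + 1)) := fun ℓ g =>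
    WithLp.toLp 2 ((∑ k, xb G x ℓ k g)⁻¹ • fun k => xb G x ℓ k g)
  have hhom : ∀ ℓ g, f ℓ (xh ℓ g) = ((p ^ en ℓ : ℕ) : ℝ) • hom (f ℓ) (fun k => xb G x ℓ k g) := by
    intro ℓ g
    rw [hom, smul_smul, hlam, one_smul]
  have hphi : ∀ ℓ g t, ∑ j, G.φ t (zz G x) j * (f ℓ (xh ℓ g) j : 𝕂)
      = ∑ j, G.φ t (zz G x) j * (bb G f ℓ x j : 𝕂) := by
    intro ℓ g t
    rw [sum_phi_bb, ← four_const he _ (fun χ hχ => (Y2_eq G f ℓ χ t x).symm.trans (h2' ℓ χ hχ t)) g,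
      hhom, Finset.mul_sum]
    refine Finset.sum_congr rfl fun j _ => ?_
    rw [PiLp.smul_apply, smul_eq_mul]
    push_cast
    ring
  have hbar : ∀ ℓ t, ∑ j, G.φ t (zz G x) j * ((bb G f ℓ x - bb G f 0 x) j : 𝕂) = 0 := by
    intro ℓ t
    refine Fin.cases ?_ (fun ℓ => ?_) ℓ
    · simp
    · rcases G.coin with h | h
      · exact absurd ℓ.2 (by omega)
      · exact h (zz G x) _ (fun s => h4 s ℓ) t
  refine ⟨AffineSubspace.mk' (bb G f 0 x) D, ⟨_, AffineSubspace.self_mem_mk' _ _⟩, ?_, fun ℓ => ?_⟩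
  · rw [AffineSubspace.direction_mk', hD]
  let E : Fin (p ^ en ℓ) ≃ (Fin (en ℓ) → ZMod p) :=
    (Fintype.equivFinOfCardEq (by simp [ZMod.card])).symm
  refine ⟨fun j => Finset.univ.filter fun k => xb G x ℓ k (E j) ≠ 0, fun j => ?_,
    fun j j' hj => ?_, fun j i => ?_, fun j => ?_⟩
  · obtain ⟨k, -, hk⟩ := Finset.exists_ne_zero_of_sum_ne_zero (hpos ℓ (E j)).ne'
    exact ⟨k, by simpa using hk⟩
  · rw [Finset.disjoint_left]
    intro k hk hk'
    simp only [Finset.mem_filter, Finset.mem_univ, true_and] at hk hk'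
    exact mul_ne_zero hk hk' (hdis ℓ k _ _ fun h => hj (E.injective h))
  · exact (colr_eq_zero_iff (C ℓ i) _ fun k => hnn ℓ k _).1 (hcol ℓ i (E j))
  · refine ⟨f ℓ (xh ℓ (E j)), ⟨_, ⟨normalize_mem (fun k => hnn ℓ k _) (hpos ℓ _), ?_⟩, rfl⟩, ?_⟩
    · intro k hk
      simp only [Finset.mem_filter, Finset.mem_univ, true_and]
      exact fun h => hk (by simp [h])
    · rw [SetLike.mem_coe, AffineSubspace.mem_mk']
      refine hDm _ fun t => ?_
      have a1 := hphi ℓ (E j) t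
      have a2 := hbar ℓ t
      simp only [vsub_eq_sub, PiLp.sub_apply, RCLike.ofReal_sub, mul_sub,
        Finset.sum_sub_distrib] at a2 ⊢
      rw [a1, a2]

end final
end TTW

/-- The topological transversal weak colored Tverberg theorem. -/
theorem topological_transversal_weak_colored_tverberg
    (m d p : ℕ) (hp : p.Prime) (hmd : m < d)
    (e : Fin (m + 1) → ℕ)
    (heven : Even (p * (d - m)) ∨ m = 0)
    (N : Fin (m + 1) → ℕ) (hN : ∀ ℓ, N ℓ = (p ^ e ℓ - 1) * (2 * d + 2 - m))
    (C : ∀ ℓ : Fin (m + 1), Fin (d + 1) → Finset (Fin (N ℓ + 1)))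
    (hCdisj : ∀ ℓ, ∀ i i' : Fin (d + 1), i ≠ i' → Disjoint (C ℓ i) (C ℓ i'))
    (hCcover : ∀ ℓ, ∀ v : Fin (N ℓ + 1), ∃ i, v ∈ C ℓ i)
    (hCcard : ∀ ℓ i, (C ℓ i).card ≤ 2 * p ^ e ℓ - 1)
    (f : ∀ ℓ : Fin (m + 1), EuclideanSpace ℝ (Fin (N ℓ + 1)) → EuclideanSpace ℝ (Fin d))
    (hf : ∀ ℓ, ContinuousOn (f ℓ) (stdSimp (N ℓ))) :
    ∃ L : AffineSubspace ℝ (EuclideanSpace ℝ (Fin d)),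
      (L : Set (EuclideanSpace ℝ (Fin d))).Nonempty ∧
      Module.finrank ℝ L.direction = m ∧
      ∀ ℓ : Fin (m + 1), ∃ σ : Fin (p ^ e ℓ) → Finset (Fin (N ℓ + 1)),
        (∀ j, (σ j).Nonempty) ∧
        (∀ j j', j ≠ j' → Disjoint (σ j) (σ j')) ∧
        (∀ j, ∀ i : Fin (d + 1), (σ j ∩ C ℓ i).card ≤ 1) ∧
        (∀ j, (f ℓ '' simpFace (N ℓ) (σ j) ∩ (L : Set (EuclideanSpace ℝ (Fin d)))).Nonempty) := by
  classical
  have : Fact p.Prime := ⟨hp⟩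
  by_cases hp2 : p = 2
  · subst hp2
    have h1 : TTW.eTwo 1 ≠ 1 := by rw [TTW.eTwo_one]; norm_num
    refine TTW.transversal C f (TTW.gadTwo d m hmd) TTW.bu_two hmd one_pos
      (fun h => h1 (by rw [h]; rfl)) (TTW.noCancel_one _ fun k hk => ?_) hf hN hCcard fun n => ?_
    · have := AddChar.map_add_eq_mul TTW.eTwo k (-k)
      rw [hk, zero_mul, add_neg_cancel, TTW.eTwo_zero] at this
      exact one_ne_zero this
    · refine ⟨Finset.univ.erase 0, ?_, fun χ hχ => Finset.ne_of_mem_erase hχ, fun χ hχ =>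
        Or.inl (Finset.mem_erase.2 ⟨hχ, Finset.mem_univ _⟩)⟩
      rw [Finset.card_erase_of_mem (Finset.mem_univ _), Finset.card_univ]
      simp [ZMod.card]
  · have hodd : Odd p := hp.odd_of_ne_two hp2
    have hne : (ZMod.stdAddChar : AddChar (ZMod p) ℂ) ≠ 1 := by
      intro h
      have h0 : (1 : ZMod p) = 0 := ZMod.injective_stdAddChar (by
        rw [h]; rfl)
      exact one_ne_zero h0
    have hG : Nonempty (TTW.Gadget p ℂ ZMod.stdAddChar d m) := by
      rcases heven with h | h
      · rcases Nat.even_mul.1 h with h' | h'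
        · exact absurd h' (Nat.not_even_iff_odd.2 hodd)
        · obtain ⟨k, hk⟩ := h'
          exact ⟨TTW.gadOdd p hp2 _ d m k hmd (by omega)⟩
      · subst h
        exact ⟨TTW.gadZero p _ d⟩
    obtain ⟨G⟩ := hG
    exact TTW.transversal C f G (TTW.bu_odd p hp) hmd two_pos hne
      (TTW.noCancel_two _ hodd TTW.std_norm) hf hN hCcard (TTW.exists_half hp2)
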